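/- arXiv:1502.01149 — 3 statements merged into one kernel-verified Lean document; each statement's English description precedes it below -/
import Mathlib

section
/- Let n ≥ 4 and let φ : ℝⁿ → ℝⁿ be a continuous, non-degenerate coherency preserver for the form q(x₁,…,xₙ) = xₙ² − (x₁² + ⋯ + x_{n−1}²). Assume φ(0) = 0, the induced map φ_0 : 𝒬 → 𝒬 is nonconstant, and 0 is generic (the preimage φ⁻¹({0}) has empty interior). Then φ_0 is a homeomorphism of 𝒬 onto itself (𝒬 carrying the subspace topology from ℝⁿ). -/
/-!
Write `q` for the form, `B` for its polar form, `𝒬` for the sphere of null directions, `f = φ_0`, and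
let `inv x = 2x / q(x)`. If `q(φ x) ≠ 0`, the null line `ℝ p` meets the cone at `x` in
`B(inv x, p)⁻¹ p`, and its image lies both on `ℝ f(p)` and on the cone at `φ x`, hence
`φ (B(inv x, p)⁻¹ p) = B(inv (φ x), f p)⁻¹ f p` (`Based.meet`). So `B(inv (φ x), f p)` depends only on
`B(inv x, p)`: the map `Z = inv ∘ φ ∘ inv` sends pieces of null hyperplanes into null hyperplanes
(`Based.hyper`).

*Affinity.* Choose `p_j` in general position such that the `f p_j` form a basis of the span of
`f(𝒬)`. Expanding one more `f p` in this basis yields a Cauchy functional equation for the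
coordinates `B(Z(X), f p_j)`, so by continuity `Z` is locally affine modulo `f(𝒬)^⊥`
(`Based.linear_coord`, `Based.affine`). The transpose `N` of its linear part satisfies
`N (f p) ∈ ℝ p` for every `p`.

*Dichotomy.* If `N (f p) ≠ 0` for some `p` then `N` is bijective, its inverse preserves null vectors
and is therefore conformal, and `f` is a bijection of `𝒬` (`Based.bijOn_of_linear`). Otherwise
`inv ∘ φ` is locally constant modulo `f(𝒬)^⊥` (`Based.dichotomy`).

*Excluding local constancy.* Take `x` with `q(x), q(φ x) ≠ 0` and let `s₀ x` be the last point of the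
segment from `0` to `x` at which `q ∘ φ` vanishes. If `s₀ = 0`, the formula above makes `φ` a nonzero
constant on a half-open segment of a null line ending at `0`, which contradicts `φ 0 = 0`
(`Based.ray`). If `s₀ > 0`, letting `s → s₀` shows that `φ(s₀ x)` is null and orthogonal to `f(𝒬)`; as
`f` is not constant, `φ(s₀ x) = 0`. Apply the dichotomy to `y ↦ φ(s₀ x + y)`, with induced map `g`.
Local constancy is again excluded by `Based.ray`, so `g` is surjective. But `g` takes values of `f` on
a dense set of directions, whereas `f(𝒬)` lies in a proper hyperplane (otherwise `φ` would be constant on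
the half-open segment from `s₀ x` to `x`), contradicting that `𝒬` spans the space (`Based.bijOn`).

Finally `f` is continuous (`Based.contOn`) and `𝒬` is compact, so the bijection is a homeomorphism.
-/

/-- The standard Minkowski quadratic form
`q(x₁,…,xₙ) = xₙ² − (x₁² + ⋯ + x_{n−1}²)` on `ℝⁿ`. -/
noncomputable def mq (n : ℕ) (x : Fin n → ℝ) : ℝ :=
  ∑ i : Fin n, (if (i : ℕ) = n - 1 then (1 : ℝ) else -1) * x i ^ 2

/-- The set `𝒬 = {(x₁,…,x_{n−1},1) : x₁² + ⋯ + x_{n−1}² = 1}` in `ℝⁿ`. -/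
def QSet (n : ℕ) : Set (Fin n → ℝ) :=
  {p | (∀ i : Fin n, (i : ℕ) = n - 1 → p i = 1) ∧
       (∑ i : Fin n, if (i : ℕ) = n - 1 then 0 else p i ^ 2) = 1}

/-- `ψ` restricted to `𝒬` is the map `φ_a` induced by `φ` at the point `a`:
it sends `𝒬` into `𝒬` and `φ` maps the coherent line `a + ℝ·p` into the
coherent line `φ(a) + ℝ·ψ(p)`. -/
def IsInducedMap (n : ℕ) (φ : (Fin n → ℝ) → (Fin n → ℝ)) (a : Fin n → ℝ)
    (ψ : (Fin n → ℝ) → (Fin n → ℝ)) : Prop :=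
  ∀ p ∈ QSet n, ψ p ∈ QSet n ∧ ∀ t : ℝ, ∃ s : ℝ, φ (a + t • p) = φ a + s • ψ p

open Filter Topology

namespace Coherency

/-! ### The polar form and the sphere of null directions -/

variable {m : ℕ}

/-- The polar form of the Minkowski form on `ℝ^(m+1)`. -/
noncomputable def B : (Fin (m + 1) → ℝ) →ₗ[ℝ] (Fin (m + 1) → ℝ) →ₗ[ℝ] ℝ :=
  LinearMap.mk₂ ℝ
    (fun x y => x (Fin.last m) * y (Fin.last m) - ∑ i : Fin m, x i.castSucc * y i.castSucc)
    (by intro x y z; simp only [Pi.add_apply, add_mul, Finset.sum_add_distrib]; ring)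
    (by intro c x y; simp only [Pi.smul_apply, smul_eq_mul, mul_assoc, ← Finset.mul_sum]; ring)
    (by intro x y z; simp only [Pi.add_apply, mul_add, Finset.sum_add_distrib]; ring)
    (by intro c x y
        simp only [Pi.smul_apply, smul_eq_mul, mul_left_comm _ c, ← Finset.mul_sum]; ring)

lemma B_apply (x y : Fin (m + 1) → ℝ) :
    B x y = x (Fin.last m) * y (Fin.last m) - ∑ i : Fin m, x i.castSucc * y i.castSucc := rfl

lemma B_comm (x y : Fin (m + 1) → ℝ) : B x y = B y x := by
  simp only [B_apply, mul_comm]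

lemma mq_eq (x : Fin (m + 1) → ℝ) : mq (m + 1) x = B x x := by
  rw [mq, Fin.sum_univ_castSucc, B_apply]
  have h : ∀ i : Fin m, ((i.castSucc : Fin (m + 1)) : ℕ) ≠ m + 1 - 1 := fun i => by
    have := i.2; simp; omega
  simp only [h, if_false]
  simp [pow_two]; ring

lemma mem_Q (p : Fin (m + 1) → ℝ) : p ∈ QSet (m + 1) ↔ p (Fin.last m) = 1 ∧ B p p = 0 := by
  have h : ∀ i : Fin m, ((i.castSucc : Fin (m + 1)) : ℕ) ≠ m + 1 - 1 := fun i => by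
    have := i.2; simp; omega
  have h2 : (∀ i : Fin (m + 1), (i : ℕ) = m + 1 - 1 → p i = 1) ↔ p (Fin.last m) = 1 := by
    constructor
    · intro H; exact H _ (by simp)
    · intro H i hi
      have : i = Fin.last m := Fin.ext (by simpa using hi)
      rw [this, H]
  simp only [QSet, Set.mem_ofPred_eq, h2]
  refine and_congr_right fun h1 => ?_
  rw [Fin.sum_univ_castSucc, B_apply, h1]
  simp only [h, if_false]
  simp only [Fin.val_last, Nat.add_sub_cancel, if_true, add_zero, pow_two]
  constructor <;> intro h <;> linarith

lemma B_cont : Continuous fun z : (Fin (m + 1) → ℝ) × (Fin (m + 1) → ℝ) => B z.1 z.2 := by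
  simp only [B_apply]; fun_prop

@[fun_prop]
lemma B_continuous {X : Type*} [TopologicalSpace X] {g h : X → Fin (m + 1) → ℝ}
    (hg : Continuous g) (hh : Continuous h) : Continuous fun x => B (g x) (h x) :=
  B_cont.comp (hg.prodMk hh)

@[fun_prop]
lemma B_continuousAt {X : Type*} [TopologicalSpace X] {g h : X → Fin (m + 1) → ℝ} {a : X}
    (hg : ContinuousAt g a) (hh : ContinuousAt h a) : ContinuousAt (fun x => B (g x) (h x)) a :=
  ContinuousAt.comp (f := fun x => (g x, h x)) B_cont.continuousAt (hg.prodMk hh)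

@[fun_prop]
lemma B_continuousWithinAt {X : Type*} [TopologicalSpace X] {g h : X → Fin (m + 1) → ℝ} {a : X}
    {s : Set X} (hg : ContinuousWithinAt g s a) (hh : ContinuousWithinAt h s a) :
    ContinuousWithinAt (fun x => B (g x) (h x)) s a :=
  ContinuousAt.comp_continuousWithinAt (f := fun x => (g x, h x)) B_cont.continuousAt
    (hg.prodMk hh)

/-- Every linear functional is represented by the polar form. -/
lemma exists_rep (l : (Fin (m + 1) → ℝ) →ₗ[ℝ] ℝ) : ∃ v, ∀ y, B v y = l y := by
  refine ⟨fun i => if i = Fin.last m then l (Pi.single i 1) else - l (Pi.single i 1), fun y => ?_⟩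
  conv_rhs => rw [LinearMap.pi_apply_eq_sum_univ l y, Fin.sum_univ_castSucc]
  have h : ∀ i : Fin m, (i.castSucc : Fin (m + 1)) ≠ Fin.last m := fun i => Fin.castSucc_ne_last i
  have h3 : ∀ i : Fin (m + 1), (fun j => if i = j then (1 : ℝ) else 0) = Pi.single i 1 := by
    intro i; ext j; simp [Pi.single_apply, eq_comm]
  simp only [B_apply, h, if_false, if_true, h3, smul_eq_mul, neg_mul, Finset.sum_neg_distrib]
  simp only [mul_comm]; ring

lemma eq_zero_of_B {x : Fin (m + 1) → ℝ} (h : ∀ w, B w x = 0) : x = 0 := by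
  ext i
  obtain ⟨v, hv⟩ := exists_rep (LinearMap.proj i : (Fin (m + 1) → ℝ) →ₗ[ℝ] ℝ)
  simpa [h] using (hv x).symm

lemma Q_ne {p : Fin (m + 1) → ℝ} (hp : p ∈ QSet (m + 1)) : p ≠ 0 := by
  rintro rfl; simp [mem_Q] at hp

/-- For null vectors, vanishing of the last coordinate forces the vector to vanish. -/
lemma null_last {x : Fin (m + 1) → ℝ} (h : B x x = 0) (hl : x (Fin.last m) = 0) : x = 0 := by
  rw [B_apply, hl] at h
  have h1 : ∑ i : Fin m, x i.castSucc * x i.castSucc = 0 := by linarith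
  rw [Finset.sum_eq_zero_iff_of_nonneg (fun i _ => mul_self_nonneg _)] at h1
  ext i
  refine Fin.lastCases hl (fun i => ?_) i
  simpa using h1 i (Finset.mem_univ _)

lemma null_dir {x : Fin (m + 1) → ℝ} (h : B x x = 0) (hx : x ≠ 0) :
    x (Fin.last m) ≠ 0 ∧ (x (Fin.last m))⁻¹ • x ∈ QSet (m + 1) := by
  have h1 : x (Fin.last m) ≠ 0 := fun h2 => hx (null_last h h2)
  refine ⟨h1, ?_⟩
  rw [mem_Q]
  simp [h1, h]

lemma Q_eq_of_B {p r : Fin (m + 1) → ℝ} (hp : p ∈ QSet (m + 1)) (hr : r ∈ QSet (m + 1))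
    (h : B p r = 0) : p = r := by
  rw [mem_Q] at hp hr
  have := null_last (x := p - r) (by simp [hp.2, hr.2, h, B_comm r p]) (by simp [hp.1, hr.1])
  exact sub_eq_zero.mp this

/-- A null vector orthogonal to a point `r` of the sphere is a multiple of `r`. -/
lemma null_orth {x r : Fin (m + 1) → ℝ} (hx : B x x = 0) (hr : r ∈ QSet (m + 1))
    (h : B x r = 0) : x = x (Fin.last m) • r := by
  by_cases h0 : x = 0
  · simp [h0]
  obtain ⟨h1, h2⟩ := null_dir hx h0
  rw [← Q_eq_of_B h2 hr (by simp [h]), smul_smul, mul_inv_cancel₀ h1, one_smul]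

lemma B_sub_sub (x y : Fin (m + 1) → ℝ) :
    B (x - y) (x - y) = B x x - 2 * B x y + B y y := by
  simp [B_comm y x]; ring

lemma B_sub_smul {x p : Fin (m + 1) → ℝ} (hp : p ∈ QSet (m + 1)) (t : ℝ) :
    B (x - t • p) (x - t • p) = B x x - 2 * t * B x p := by
  rw [B_sub_sub]; simp [((mem_Q p).1 hp).2]; ring

lemma exists_B_one {p : Fin (m + 1) → ℝ} (hp : p ≠ 0) : ∃ u, B u p = 1 := by
  by_contra! h
  apply hp
  apply eq_zero_of_B
  intro w
  by_contra hw
  apply h ((B w p)⁻¹ • w)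
  simp [hw]

/-- The biorthogonal of a line is that line. -/
lemma biorth {p y : Fin (m + 1) → ℝ} (hp : p ∈ QSet (m + 1))
    (h : ∀ w, B w p = 0 → B w y = 0) : y = y (Fin.last m) • p := by
  obtain ⟨u, hu⟩ := exists_B_one (Q_ne hp)
  have : y = B u y • p := by
    rw [← sub_eq_zero]
    apply eq_zero_of_B
    intro w
    have := h (w - B w p • u) (by simp [hu])
    simp at this ⊢
    linarith
  have h2 : y (Fin.last m) = B u y := by
    conv_lhs => rw [this]
    simp [((mem_Q p).1 hp).1]
  rw [h2]; exact this

/-- `QSet` is not contained in a hyperplane. -/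
lemma Q_total {w : Fin (m + 1) → ℝ} (hm : 1 ≤ m) (hw : ∀ p ∈ QSet (m + 1), B w p = 0) : w = 0 := by
  have key : ∀ (i : Fin m) (s : ℝ), s * s = 1 →
      w (Fin.last m) - s * w i.castSucc = 0 := by
    intro i s hs
    have := hw (Pi.single (Fin.last m) 1 + s • Pi.single i.castSucc 1) ?_
    · rw [B_apply] at this
      simpa [Pi.single_apply, Fin.castSucc_ne_last, (Fin.castSucc_ne_last _).symm,
        mul_comm] using this
    · rw [mem_Q, B_apply]
      simp [Pi.single_apply, Fin.castSucc_ne_last, (Fin.castSucc_ne_last _).symm, hs]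
  have h1 : ∀ i : Fin m, w i.castSucc = 0 ∧ w (Fin.last m) = 0 := by
    intro i
    have h1 := key i 1 (by norm_num)
    have h2 := key i (-1) (by norm_num)
    constructor <;> linarith
  ext i
  refine Fin.lastCases (h1 ⟨0, hm⟩).2 (fun i => (h1 i).1) i

/-- Points of the sphere outside a given hyperplane are dense in the sphere: for `p₀` in
the hyperplane and `p'` outside it, the conic `p₀ + s v + s² c p'`, with `v` orthogonal to `p₀` and
`p'`, consists of null vectors and leaves the hyperplane. -/
lemma dense {w p₀ : Fin (m + 1) → ℝ} (hm : 2 ≤ m) (hw : w ≠ 0) (hp₀ : p₀ ∈ QSet (m + 1))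
    {P : (Fin (m + 1) → ℝ) → Prop} (hP : ∀ᶠ p in 𝓝[QSet (m + 1)] p₀, P p) :
    ∃ p ∈ QSet (m + 1), (∀ᶠ p' in 𝓝[QSet (m + 1)] p, P p') ∧ B w p ≠ 0 := by
  by_cases h0 : B w p₀ = 0
  swap
  · exact ⟨p₀, hp₀, hP, h0⟩
  obtain ⟨p', hp', hwp'⟩ : ∃ p' ∈ QSet (m + 1), B w p' ≠ 0 := by
    by_contra! h; exact hw (Q_total (by omega) h)
  have hne : B p₀ p' ≠ 0 := fun h => hwp' (Q_eq_of_B hp₀ hp' h ▸ h0)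
  obtain ⟨v, hv, hv0⟩ : ∃ v, (B v p₀ = 0 ∧ B v p' = 0) ∧ v ≠ 0 := by
    have : LinearMap.ker ((B p₀).prod (B p')) ≠ ⊥ := by
      apply LinearMap.ker_ne_bot_of_finrank_lt
      simp; omega
    obtain ⟨v, hv, hv0⟩ := (Submodule.ne_bot_iff _).1 this
    refine ⟨v, ?_, hv0⟩
    simpa [B_comm v] using hv
  have hq : B v v ≠ 0 := by
    intro hq
    have h1 := null_orth hq hp₀ hv.1
    have h2 := hv.2
    rw [h1] at h2
    simp [hne] at h2
    exact hv0 (null_last hq h2)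
  set c := - B v v / (2 * B p₀ p') with hc
  have hc0 : c ≠ 0 := by simp [hc, hq, hne]
  let N : ℝ → Fin (m + 1) → ℝ := fun s => p₀ + s • v + (s ^ 2 * c) • p'
  have hN : ∀ s, B (N s) (N s) = 0 := by
    intro s
    have e1 := ((mem_Q _).1 hp₀).2
    have e2 := ((mem_Q _).1 hp').2
    simp only [N, map_add, map_smul, LinearMap.add_apply, LinearMap.smul_apply, smul_eq_mul,
      e1, e2, hv.1, hv.2, B_comm p₀ v, B_comm p' v, B_comm p' p₀, hc]
    field_simp
    ring
  have hNc : Continuous N := by fun_prop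
  have hN0 : N 0 = p₀ := by simp [N]
  have hl0 : N 0 (Fin.last m) = 1 := by rw [hN0, ((mem_Q _).1 hp₀).1]
  have hlast : ∀ᶠ s in 𝓝 (0 : ℝ), N s (Fin.last m) ≠ 0 :=
    ((continuous_apply (Fin.last m)).comp hNc).continuousAt.eventually_ne (by simp [hl0])
  let R : ℝ → Fin (m + 1) → ℝ := fun s => (N s (Fin.last m))⁻¹ • N s
  have hR0 : R 0 = p₀ := by simp only [R, hl0]; simp [hN0]
  have hRc : ContinuousAt R 0 := by
    have h1 : ContinuousAt (fun s => N s (Fin.last m)) 0 :=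
      ((continuous_apply (Fin.last m)).comp hNc).continuousAt
    exact (h1.inv₀ (by simp [hl0])).smul hNc.continuousAt
  have hRQ : ∀ᶠ s in 𝓝 (0 : ℝ), R s ∈ QSet (m + 1) := by
    filter_upwards [hlast] with s hs
    exact (null_dir (hN s) (fun h => hs (by simp [h]))).2
  have hRt : Tendsto R (𝓝 0) (𝓝[QSet (m + 1)] p₀) :=
    tendsto_nhdsWithin_iff.2 ⟨by simpa [ContinuousAt, hR0] using hRc, hRQ⟩
  have h1 := hRt.eventually (eventually_eventually_nhdsWithin.2 hP)
  have h2 : ∀ᶠ s in 𝓝[≠] (0 : ℝ), B w (N s) ≠ 0 := by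
    have h3 : ∀ᶠ s in 𝓝 (0 : ℝ), s = 0 ∨ B w v + s * c * B w p' ≠ 0 := by
      by_cases hwv : B w v = 0
      · filter_upwards with s
        by_cases hs : s = 0
        · exact Or.inl hs
        · right; simp [hwv, hs, hc0, hwp']
      · have : ContinuousAt (fun s : ℝ => B w v + s * c * B w p') 0 := by fun_prop
        filter_upwards [this.eventually_ne (y := 0) (by simpa using hwv)] with s hs
        exact Or.inr hs
    filter_upwards [h3.filter_mono nhdsWithin_le_nhds, self_mem_nhdsWithin] with s hs hs0
    have hs' := hs.resolve_left hs0
    have : B w (N s) = s * (B w v + s * c * B w p') := by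
      simp [N, h0]; ring
    rw [this]
    exact mul_ne_zero hs0 hs'
  obtain ⟨s, hs1, hs2, hs3, hs4⟩ := ((h1.filter_mono nhdsWithin_le_nhds).and
    ((hRQ.filter_mono nhdsWithin_le_nhds).and
    ((hlast.filter_mono nhdsWithin_le_nhds).and h2))).exists
  refine ⟨R s, hs2, hs1, ?_⟩
  simp [R, hs3, hs4]

/-! ### Coherency preservers, induced maps and inversion -/

/-- Non-degenerate continuous coherency preservers, expressed through the polar form. -/
structure Pres (φ : (Fin (m + 1) → ℝ) → (Fin (m + 1) → ℝ)) : Prop where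
  cont : Continuous φ
  pres : ∀ a b, B (b - a) (b - a) = 0 → B (φ b - φ a) (φ b - φ a) = 0
  nd : ∀ s, ∃ x, B (φ x - s) (φ x - s) ≠ 0

/-- A non-degenerate continuous coherency preserver `φ` fixing the origin, together with the map `f`
that it induces on the null directions at the origin. -/
structure Based (φ f : (Fin (m + 1) → ℝ) → (Fin (m + 1) → ℝ)) : Prop extends Pres φ where
  zero : φ 0 = 0
  mem : ∀ p ∈ QSet (m + 1), f p ∈ QSet (m + 1)
  line : ∀ p ∈ QSet (m + 1), ∀ t : ℝ, ∃ s : ℝ, φ (t • p) = s • f p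

variable {φ f : (Fin (m + 1) → ℝ) → (Fin (m + 1) → ℝ)}

/-- `φ` is not constant on any null line: almost every point is coherent to some point
of the line, so a constant value on it would make `φ` degenerate. -/
lemma Pres.nonconst_line (h : Pres φ) {p : Fin (m + 1) → ℝ} (hp : p ∈ QSet (m + 1))
    (a : Fin (m + 1) → ℝ) : ∃ t : ℝ, φ (a + t • p) ≠ φ a := by
  by_contra! H
  obtain ⟨x, hx⟩ := h.nd (φ a)
  apply hx
  have key : ∀ x, B (x - a) p ≠ 0 → B (φ x - φ a) (φ x - φ a) = 0 := by
    intro x hx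
    set t := B (x - a) (x - a) / (2 * B (x - a) p) with ht
    have h1 := h.pres (a + t • p) x (by
      rw [← sub_sub, B_sub_smul hp, ht]; field_simp; ring)
    rwa [H t] at h1
  obtain ⟨u, hu⟩ := exists_B_one (Q_ne hp)
  by_cases h0 : B (x - a) p = 0
  swap
  · exact key x h0
  have hc : Continuous fun ε : ℝ =>
      B (φ (x + ε • u) - φ a) (φ (x + ε • u) - φ a) := by
    have := h.cont
    fun_prop
  have h1 : Tendsto (fun ε : ℝ => B (φ (x + ε • u) - φ a) (φ (x + ε • u) - φ a))
      (𝓝[≠] 0) (𝓝 (B (φ x - φ a) (φ x - φ a))) := by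
    have := hc.tendsto 0
    simp only [zero_smul, add_zero] at this
    exact this.mono_left nhdsWithin_le_nhds
  refine tendsto_nhds_unique (h1.congr' ?_) tendsto_const_nhds
  filter_upwards [self_mem_nhdsWithin] with ε hε
  apply key
  have : x + ε • u - a = (x - a) + ε • u := by abel
  rw [this, map_add, LinearMap.add_apply, h0, map_smul, LinearMap.smul_apply, hu]
  simpa using hε

lemma Pres.exists_based (h : Pres φ) (h0 : φ 0 = 0) : ∃ f, Based φ f := by
  have H : ∀ p : Fin (m + 1) → ℝ, ∃ r, p ∈ QSet (m + 1) →
      r ∈ QSet (m + 1) ∧ ∀ t : ℝ, ∃ s : ℝ, φ (t • p) = s • r := by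
    intro p
    by_cases hp : p ∈ QSet (m + 1)
    swap
    · exact ⟨0, fun h => absurd h hp⟩
    obtain ⟨t, ht⟩ := h.nonconst_line hp 0
    rw [h0, zero_add] at ht
    have hnull : ∀ t : ℝ, B (φ (t • p)) (φ (t • p)) = 0 := fun t => by
      have := h.pres 0 (t • p) (by simp [((mem_Q p).1 hp).2])
      simpa [h0] using this
    obtain ⟨h1, h2⟩ := null_dir (hnull t) ht
    refine ⟨_, fun _ => ⟨h2, fun s => ⟨_, null_orth (hnull s) h2 ?_⟩⟩⟩
    have h3 := h.pres (t • p) (s • p) (by simp [((mem_Q p).1 hp).2])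
    rw [B_sub_sub, hnull, hnull] at h3
    have : B (φ (s • p)) (φ (t • p)) = 0 := by linarith
    simp [this]
  choose f hf using H
  exact ⟨f, h, h0, fun p hp => (hf p hp).1, fun p hp => (hf p hp).2⟩

/-- A nonzero value on the null line through `p` determines `f p`. -/
lemma Based.eq_dir (h : Based φ f) {p r : Fin (m + 1) → ℝ} (hp : p ∈ QSet (m + 1))
    (hr : r ∈ QSet (m + 1)) {t s : ℝ} (h1 : φ (t • p) = s • r) (h2 : φ (t • p) ≠ 0) : f p = r := by
  obtain ⟨s', hs'⟩ := h.line p hp t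
  have hl := ((mem_Q _).1 hr).1
  have hl' := ((mem_Q _).1 (h.mem p hp)).1
  have e : s' • f p = s • r := hs' ▸ h1
  have e2 : s' = s := by simpa [hl, hl'] using congrFun e (Fin.last m)
  have hs : s ≠ 0 := by rintro rfl; exact h2 (by simp [h1])
  rw [e2] at e
  exact smul_right_injective _ hs e

lemma Based.unique (h : Based φ f) {g : (Fin (m + 1) → ℝ) → (Fin (m + 1) → ℝ)} (h' : Based φ g)
    {p : Fin (m + 1) → ℝ} (hp : p ∈ QSet (m + 1)) : f p = g p := by
  obtain ⟨t, ht⟩ := h.nonconst_line hp 0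
  rw [h.zero, zero_add] at ht
  obtain ⟨s, hs⟩ := h'.line p hp t
  exact h.eq_dir hp (h'.mem p hp) hs ht

lemma Based.contOn (h : Based φ f) : ContinuousOn f (QSet (m + 1)) := by
  intro p hp
  obtain ⟨t, ht⟩ := h.nonconst_line hp 0
  rw [h.zero, zero_add] at ht
  have key : ∀ r ∈ QSet (m + 1), φ (t • r) ≠ 0 →
      f r = (φ (t • r) (Fin.last m))⁻¹ • φ (t • r) ∧ φ (t • r) (Fin.last m) ≠ 0 := by
    intro r hr h0
    have hnull : B (φ (t • r)) (φ (t • r)) = 0 := by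
      have := h.pres 0 (t • r) (by simp [((mem_Q r).1 hr).2])
      simpa [h.zero] using this
    obtain ⟨h1, h2⟩ := null_dir hnull h0
    refine ⟨h.eq_dir hr h2 (t := t) (s := φ (t • r) (Fin.last m)) ?_ h0, h1⟩
    rw [smul_smul, mul_inv_cancel₀ h1, one_smul]
  have hc : Continuous fun r => φ (t • r) := by have := h.cont; fun_prop
  have hc' : Continuous fun r => φ (t • r) (Fin.last m) := (continuous_apply _).comp hc
  have hg : ContinuousAt (fun r => (φ (t • r) (Fin.last m))⁻¹ • φ (t • r)) p :=
    (hc'.continuousAt.inv₀ (key p hp ht).2).smul hc.continuousAt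
  refine hg.continuousWithinAt.congr_of_eventuallyEq ?_ (key p hp ht).1
  filter_upwards [self_mem_nhdsWithin,
    (hc.continuousAt.eventually_ne ht).filter_mono nhdsWithin_le_nhds] with r hr hne
  exact (key r hr hne).1

/-- Inversion `x ↦ 2x / q(x)`; it linearises the intersection of the cones at `0` and at `x`. -/
noncomputable def inv (x : Fin (m + 1) → ℝ) : Fin (m + 1) → ℝ := (2 / B x x) • x

lemma B_inv_inv {x : Fin (m + 1) → ℝ} : B (inv x) (inv x) = 4 / B x x := by
  by_cases h : B x x = 0
  · simp [inv, h]
  · simp [inv]; field_simp; norm_num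

lemma B_inv (x y : Fin (m + 1) → ℝ) : B (inv x) y = 2 / B x x * B x y := by
  simp [inv]

lemma inv_inv {x : Fin (m + 1) → ℝ} (h : B x x ≠ 0) : inv (inv x) = x := by
  have : inv (inv x) = (2 / B (inv x) (inv x)) • inv x := rfl
  rw [this, B_inv_inv, inv, smul_smul]
  have : 2 / (4 / B x x) * (2 / B x x) = 1 := by field_simp; norm_num
  rw [this, one_smul]

lemma inv_continuousAt {x : Fin (m + 1) → ℝ} (h : B x x ≠ 0) : ContinuousAt inv x := by
  have h1 : ContinuousAt (fun y : Fin (m + 1) → ℝ => B y y) x :=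
    B_continuousAt continuousAt_id continuousAt_id
  exact (continuousAt_const.div h1 h).smul continuousAt_id

lemma inv_smul (x : Fin (m + 1) → ℝ) (s : ℝ) : inv (s • x) = s⁻¹ • inv x := by
  by_cases hs : s = 0
  · simp [hs, inv]
  simp only [inv, map_smul, LinearMap.smul_apply, smul_eq_mul, smul_smul]
  congr 1
  by_cases h : B x x = 0
  · simp [h]
  field_simp

/-- The value of `φ` at the point where the null line through `p` meets the cone at `x`. -/
lemma Based.meet (h : Based φ f) {x p : Fin (m + 1) → ℝ} (hp : p ∈ QSet (m + 1))
    (hφ : B (φ x) (φ x) ≠ 0) (hB : B (inv x) p ≠ 0) :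
    B (inv (φ x)) (f p) ≠ 0 ∧
      φ ((B (inv x) p)⁻¹ • p) = (B (inv (φ x)) (f p))⁻¹ • f p := by
  rw [B_inv] at hB ⊢
  obtain ⟨s, hs⟩ := h.line p hp (2 / B x x * B x p)⁻¹
  have hB' : B x p ≠ 0 := right_ne_zero_of_mul hB
  have h1 := h.pres ((2 / B x x * B x p)⁻¹ • p) x (by
    rw [B_sub_smul hp]; field_simp; ring)
  rw [hs, B_sub_smul (h.mem p hp)] at h1
  have h2 : B (φ x) (f p) ≠ 0 := fun h2 => hφ (by rw [h2] at h1; linarith)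
  rw [B_inv]
  refine ⟨mul_ne_zero (div_ne_zero two_ne_zero hφ) h2, ?_⟩
  rw [hs]
  congr 1
  field_simp
  linarith

/-- The inverted map sends pieces of null hyperplanes into null hyperplanes. -/
lemma Based.hyper (h : Based φ f) {x y p : Fin (m + 1) → ℝ} (hp : p ∈ QSet (m + 1))
    (hφx : B (φ x) (φ x) ≠ 0) (hφy : B (φ y) (φ y) ≠ 0)
    (hB : B (inv x) p ≠ 0) (hxy : B (inv x) p = B (inv y) p) :
    B (inv (φ x)) (f p) = B (inv (φ y)) (f p) := by
  have h1 := h.meet hp hφx hB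
  have h2 := h.meet hp hφy (hxy ▸ hB)
  have h3 := h1.2
  rw [hxy, h2.2] at h3
  have := congrFun h3 (Fin.last m)
  simpa [((mem_Q _).1 (h.mem p hp)).1] using this.symm

/-! ### Local affinity of the inverted map -/

/-- Continuous local solutions of the Cauchy functional equation are linear. -/
lemma local_cauchy {g : ℝ → ℝ} {δ : ℝ} (hδ : 0 < δ) (hc : ContinuousAt g 0)
    (hadd : ∀ u v, |u| < δ → |v| < δ → g (u + v) = g u + g v) :
    ∃ c, ∀ u, |u| < δ → g u = c * u := by
  have g0 : g 0 = 0 := by simpa using hadd 0 0 (by simpa) (by simpa)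
  have hmul : ∀ (k : ℕ) (v : ℝ), |k * v| < δ → g (k * v) = k * g v := by
    intro k
    induction k with
    | zero => intro v _; simp [g0]
    | succ k ih =>
      intro v hv
      rw [abs_mul, Nat.abs_cast] at hv
      push_cast at hv ⊢
      have hv0 := abs_nonneg v
      have hk : (0 : ℝ) ≤ k := Nat.cast_nonneg k
      have h1 : |(k : ℝ) * v| < δ := by rw [abs_mul, Nat.abs_cast]; nlinarith
      have h2 : |v| < δ := by nlinarith
      rw [add_mul, one_mul, hadd _ _ h1 h2, ih v h1]; ring
  have hdiv : ∀ (M N : ℕ) (u : ℝ), 0 < M → 0 < N → |u| < N * δ →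
      g (u / N) = M * g (u / (N * M)) := by
    intro M N u hM hN hu
    have hM' : (0 : ℝ) < M := Nat.cast_pos.2 hM
    have hN' : (0 : ℝ) < N := Nat.cast_pos.2 hN
    have e : u / N = M * (u / (N * M)) := by field_simp
    have h1 : |u / N| < δ := by
      rw [abs_div, Nat.abs_cast, div_lt_iff₀ hN']; linarith
    conv_lhs => rw [e]
    exact hmul M _ (e ▸ h1)
  have hind : ∀ (M N : ℕ) (u : ℝ), 0 < M → 0 < N → |u| < M * δ → |u| < N * δ →
      M * g (u / M) = N * g (u / N) := by
    intro M N u hM hN h1 h2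
    rw [hdiv N M u hN hM h1, hdiv M N u hM hN h2, mul_comm (M : ℝ) N]; ring
  let K : ℝ → ℕ := fun u => ⌊|u| / δ⌋₊ + 1
  have hK0 : ∀ u, 0 < K u := fun u => Nat.succ_pos _
  have hK : ∀ u, |u| < K u * δ := fun u => by
    have := Nat.lt_floor_add_one (|u| / δ)
    rw [div_lt_iff₀ hδ] at this
    simpa [K] using this
  -- the local solution extends to a global additive map, by homogeneity
  let a : ℝ →+ ℝ := AddMonoidHom.mk' (fun u => K u * g (u / K u)) (by
    intro u v
    have h0 : 0 < K u + K v := Nat.add_pos_left (hK0 u) _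
    have hN' : (0 : ℝ) < (K u + K v : ℕ) := Nat.cast_pos.2 h0
    have hu : |u| < (K u + K v : ℕ) * δ := by
      have := hK u
      have : 0 ≤ (K v : ℝ) * δ := by positivity
      push_cast; linarith
    have hv : |v| < (K u + K v : ℕ) * δ := by
      have := hK v
      have : 0 ≤ (K u : ℝ) * δ := by positivity
      push_cast; linarith
    have huv : |u + v| < (K u + K v : ℕ) * δ := by
      have := abs_add_le u v
      have := hK u
      have := hK v
      push_cast; linarith
    rw [hind _ _ _ (hK0 (u + v)) h0 (hK _) huv, hind _ _ _ (hK0 u) h0 (hK _) hu,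
      hind _ _ _ (hK0 v) h0 (hK _) hv, add_div, hadd, mul_add]
    · rw [abs_div, Nat.abs_cast, div_lt_iff₀ hN']; linarith
    · rw [abs_div, Nat.abs_cast, div_lt_iff₀ hN']; linarith)
  have ha : ∀ u, |u| < δ → a u = g u := by
    intro u hu
    have := hind (K u) 1 u (hK0 u) one_pos (hK u) (by simpa using hu)
    simpa [a] using this
  have hac : Continuous a := by
    apply continuous_of_continuousAt_zero
    refine hc.congr ?_
    filter_upwards [Metric.ball_mem_nhds (0 : ℝ) hδ] with u hu
    exact (ha u (by simpa using hu)).symm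
  refine ⟨a 1, fun u hu => ?_⟩
  rw [← ha u hu]
  have := (a.toRealLinearMap hac).map_smul u 1
  simp at this
  rw [this, mul_comm]

lemma exists_linear {V W : Type*} [AddCommGroup V] [Module ℝ V] [AddCommGroup W] [Module ℝ W]
    {k : ℕ} {u : Fin k → V} (hu : LinearIndependent ℝ u) (y : Fin k → W) :
    ∃ N : V →ₗ[ℝ] W, ∀ j, N (u j) = y j := by
  obtain ⟨N, hN⟩ := LinearMap.exists_extend ((Module.Basis.span hu).constr ℝ y)
  refine ⟨N, fun j => ?_⟩
  have := LinearMap.congr_fun hN (Module.Basis.span hu j)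
  rw [Module.Basis.constr_basis] at this
  rw [← this]
  simp [Module.Basis.span_apply]

lemma exists_dual {k : ℕ} {u : Fin k → Fin (m + 1) → ℝ} (hu : LinearIndependent ℝ u) (i : Fin k) :
    ∃ v, ∀ j, B v (u j) = if j = i then 1 else 0 := by
  obtain ⟨l, hl⟩ := exists_linear hu (fun j => if j = i then (1 : ℝ) else 0)
  obtain ⟨v, hv⟩ := exists_rep l
  exact ⟨v, fun j => by rw [hv, hl]⟩

/-- Near a point `X₀` of the domain of the inverted map, its coordinates along directions `f (P i)`
forming a basis of the span of the range of `f` are affine. With `v` dual to `P i`, and `w`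
orthogonal to `P i` but not to an auxiliary direction `p` close to `P i`, the expansion of `f p` in
the basis turns into a Cauchy functional equation. -/
lemma Based.linear_coord (hm : 2 ≤ m) (h : Based φ f) {X₀ : Fin (m + 1) → ℝ}
    (hX : B X₀ X₀ ≠ 0) (hφ : B (φ (inv X₀)) (φ (inv X₀)) ≠ 0) {k : ℕ}
    {P : Fin k → Fin (m + 1) → ℝ} (hP : ∀ j, P j ∈ QSet (m + 1)) (hLI : LinearIndependent ℝ P)
    (hLIf : LinearIndependent ℝ (fun j => f (P j))) (hB0 : ∀ j, B X₀ (P j) ≠ 0)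
    (hspan : ∀ p ∈ QSet (m + 1), f p ∈ Submodule.span ℝ (Set.range fun j => f (P j)))
    (i : Fin k) :
    ∃ c : ℝ, ∀ᶠ X in 𝓝 X₀, B (inv (φ (inv X))) (f (P i)) - B (inv (φ (inv X₀))) (f (P i))
      = c * B (X - X₀) (P i) := by
  have hcont := h.cont
  have hGc : ContinuousAt (fun X => φ (inv X)) X₀ :=
    ContinuousAt.comp hcont.continuousAt (inv_continuousAt hX)
  have hU : ∀ᶠ X in 𝓝 X₀, B X X ≠ 0 ∧ B (φ (inv X)) (φ (inv X)) ≠ 0 := by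
    refine ((B_continuousAt continuousAt_id continuousAt_id).eventually_ne hX).and ?_
    exact (B_continuousAt hGc hGc).eventually_ne hφ
  have hyp : ∀ X Y p, B X X ≠ 0 ∧ B (φ (inv X)) (φ (inv X)) ≠ 0 →
      B Y Y ≠ 0 ∧ B (φ (inv Y)) (φ (inv Y)) ≠ 0 → p ∈ QSet (m + 1) → B X p ≠ 0 → B X p = B Y p →
      B (inv (φ (inv X))) (f p) = B (inv (φ (inv Y))) (f p) := by
    intro X Y p hX hY hp h1 h2
    apply h.hyper hp hX.2 hY.2
    · rwa [inv_inv hX.1]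
    · rwa [inv_inv hX.1, inv_inv hY.1]
  obtain ⟨v, hv⟩ := exists_dual hLI i
  obtain ⟨wf, hwf⟩ := exists_dual hLIf i
  obtain ⟨p, hp, hwfp, hX0p, hPp⟩ : ∃ p ∈ QSet (m + 1), B wf (f p) ≠ 0 ∧ B X₀ p ≠ 0 ∧
      B (P i) p ≠ 0 := by
    have h1 : ∀ᶠ p in 𝓝[QSet (m + 1)] (P i), B wf (f p) ≠ 0 := by
      have : ContinuousWithinAt (fun p => B wf (f p)) (QSet (m + 1)) (P i) :=
        B_continuousWithinAt continuousWithinAt_const (h.contOn _ (hP i))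
      exact this.eventually_ne (by simp [hwf])
    obtain ⟨p₁, hp₁, e₁, n₁⟩ := dense hm (Q_ne (hP i)) (hP i) h1
    have h2 : ∀ᶠ p in 𝓝[QSet (m + 1)] p₁, B (P i) p ≠ 0 :=
      (B_continuousWithinAt continuousWithinAt_const continuousWithinAt_id).eventually_ne n₁
    obtain ⟨p₂, hp₂, e₂, n₂⟩ := dense hm (w := X₀) (by rintro rfl; simp at hX) hp₁ (e₁.and h2)
    have e3 := e₂.self_of_nhdsWithin hp₂
    exact ⟨p₂, hp₂, e3.1, n₂, e3.2⟩
  obtain ⟨α, hα⟩ := (Submodule.mem_span_range_iff_exists_fun ℝ).1 (hspan p hp)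
  have hαi : α i ≠ 0 := by
    have : B wf (f p) = α i := by rw [← hα]; simp [hwf]
    rwa [← this]
  set w : Fin (m + 1) → ℝ := (B (P i) p)⁻¹ • P i with hw
  have hwi : B w (P i) = 0 := by simp [hw, ((mem_Q _).1 (hP i)).2]
  have hwp : B w p = 1 := by simp [hw, hPp]
  set F : (Fin (m + 1) → ℝ) → (Fin (m + 1) → ℝ) → ℝ := fun r X => B (inv (φ (inv X))) (f r) with hF
  have hFp : ∀ X, F p X = ∑ j, α j * F (P j) X := by
    intro X; simp only [hF]; rw [← hα]; simp
  set b := B v p with hb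
  obtain ⟨δ, hδ, hgood⟩ : ∃ δ > 0, ∀ σ τ : ℝ, |σ| < δ → |τ| < δ →
      (B (X₀ + σ • v + τ • w) (X₀ + σ • v + τ • w) ≠ 0 ∧
        B (φ (inv (X₀ + σ • v + τ • w))) (φ (inv (X₀ + σ • v + τ • w))) ≠ 0) ∧
      B (X₀ + σ • v + τ • w) p ≠ 0 ∧ ∀ j, B (X₀ + σ • v + τ • w) (P j) ≠ 0 := by
    have hc : Continuous fun z : ℝ × ℝ => X₀ + z.1 • v + z.2 • w := by fun_prop
    have ht : Tendsto (fun z : ℝ × ℝ => X₀ + z.1 • v + z.2 • w) (𝓝 0) (𝓝 X₀) := by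
      simpa using hc.tendsto 0
    have h1 : ∀ᶠ X in 𝓝 X₀, (B X X ≠ 0 ∧ B (φ (inv X)) (φ (inv X)) ≠ 0) ∧ B X p ≠ 0 ∧
        ∀ j, B X (P j) ≠ 0 := by
      refine hU.and (((B_continuousAt continuousAt_id continuousAt_const).eventually_ne hX0p).and ?_)
      rw [eventually_all]
      intro j
      exact (B_continuousAt continuousAt_id continuousAt_const).eventually_ne (hB0 j)
    obtain ⟨δ, hδ, H⟩ := Metric.eventually_nhds_iff.1 (ht.eventually h1)
    refine ⟨δ, hδ, fun σ τ hσ hτ => ?_⟩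
    exact H (y := (σ, τ)) (by rw [dist_eq_norm, Prod.norm_def]; simpa using ⟨hσ, hτ⟩)
  have z0 : |(0 : ℝ)| < δ := by simpa using hδ
  have star : ∀ σ τ : ℝ, |σ| < δ → |τ| < δ → F p (X₀ + σ • v + τ • w) - F p (X₀ + τ • w)
      = α i * (F (P i) (X₀ + σ • v) - F (P i) X₀) := by
    intro σ τ hσ hτ
    have g1 := hgood σ τ hσ hτ
    have g2 := hgood 0 τ z0 hτ
    have g3 := hgood σ 0 hσ z0
    have g4 := hgood 0 0 z0 z0
    simp only [zero_smul, add_zero] at g2 g3 g4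
    rw [hFp, hFp, ← Finset.sum_sub_distrib, Finset.sum_eq_single i]
    · have e1 : F (P i) (X₀ + σ • v + τ • w) = F (P i) (X₀ + σ • v) :=
        hyp _ _ _ g1.1 g3.1 (hP i) (g1.2.2 i) (by simp [hwi])
      have e2 : F (P i) (X₀ + τ • w) = F (P i) X₀ :=
        hyp _ _ _ g2.1 g4.1 (hP i) (g2.2.2 i) (by simp [hwi])
      rw [e1, e2]; ring
    · intro j _ hj
      have e1 : F (P j) (X₀ + σ • v + τ • w) = F (P j) (X₀ + τ • w) :=
        hyp _ _ _ g1.1 g2.1 (hP j) (g1.2.2 j) (by simp [hv, hj])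
      rw [e1]; ring
    · simp
  have star2 : ∀ σ τ : ℝ, |σ| < δ → |τ| < δ → |b * σ + τ| < δ →
      F p (X₀ + σ • v + τ • w) = F p (X₀ + (b * σ + τ) • w) := by
    intro σ τ hσ hτ hs
    have g1 := hgood σ τ hσ hτ
    have g2 := hgood 0 _ z0 hs
    simp only [zero_smul, add_zero] at g2
    exact hyp _ _ _ g1.1 g2.1 hp g1.2.1 (by simp [hwp, ← hb]; ring)
  obtain ⟨c, ε, hε, hc⟩ : ∃ c : ℝ, ∃ ε > 0, ∀ σ : ℝ, |σ| < ε →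
      F (P i) (X₀ + σ • v) - F (P i) X₀ = c * σ := by
    by_cases hb0 : b = 0
    · refine ⟨0, δ, hδ, fun σ hσ => ?_⟩
      have e1 := star σ 0 hσ z0
      have e2 := star2 σ 0 hσ z0 (by simpa [hb0] using hδ)
      rw [e2] at e1
      simp [hb0] at e1
      rw [zero_mul]
      exact e1.resolve_left hαi
    · have hb' : 0 < |b| := abs_pos.2 hb0
      set η := min (δ / 2) (δ * |b|) with hη
      have hη0 : 0 < η := lt_min (by linarith) (by positivity)
      have hη1 : η ≤ δ / 2 := min_le_left _ _
      have hη2 : η ≤ δ * |b| := min_le_right _ _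
      have hdiv : ∀ u : ℝ, |u| < η → |u / b| < δ := fun u hu => by
        rw [abs_div, div_lt_iff₀ hb']; linarith
      have hg : ∀ u τ : ℝ, |u| < η → |τ| < η →
          F p (X₀ + (u + τ) • w) - F p (X₀ + τ • w)
            = α i * (F (P i) (X₀ + (u / b) • v) - F (P i) X₀) := by
        intro u τ hu hτ
        have e : b * (u / b) = u := by field_simp
        have := abs_add_le u τ
        rw [← star (u / b) τ (hdiv u hu) (by linarith),
          star2 (u / b) τ (hdiv u hu) (by linarith) (by rw [e]; linarith), e]
      obtain ⟨c, hc⟩ := local_cauchy (g := fun u => F p (X₀ + u • w) - F p X₀) hη0 (by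
        have h1 : ContinuousAt (fun X => F p X) X₀ :=
          B_continuousAt (ContinuousAt.comp (f := fun X => φ (inv X)) (inv_continuousAt hφ) hGc)
            continuousAt_const
        have h2 : ContinuousAt (fun u : ℝ => X₀ + u • w) 0 := by fun_prop
        refine ContinuousAt.sub (ContinuousAt.comp (g := fun X => F p X) ?_ h2) continuousAt_const
        simpa using h1) (by
        intro u τ hu hτ
        have e1 := hg u τ hu hτ
        have e2 := hg u 0 hu (by simpa using hη0)
        simp only [zero_smul, add_zero] at e2
        linarith)
      refine ⟨c * b / α i, η / |b|, by positivity, fun σ hσ => ?_⟩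
      have hu : |b * σ| < η := by
        rw [lt_div_iff₀ hb'] at hσ
        rw [abs_mul]; linarith
      have e1 := hc _ hu
      have e2 := hg (b * σ) 0 hu (by simpa using hη0)
      simp only [zero_smul, add_zero] at e2 e1
      rw [e1, mul_div_cancel_left₀ _ hb0] at e2
      field_simp
      linarith
  refine ⟨c, ?_⟩
  have ht : Tendsto (fun X => B (X - X₀) (P i)) (𝓝 X₀) (𝓝 0) := by
    have : Continuous fun X => B (X - X₀) (P i) := by fun_prop
    simpa using this.tendsto X₀
  filter_upwards [hU, ht.eventually (Metric.ball_mem_nhds 0 (lt_min hε hδ)),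
    (B_continuousAt continuousAt_id continuousAt_const).eventually_ne (hB0 i)] with X hXU hX1 hX2
  have hX1' : |B (X - X₀) (P i)| < min ε δ := by
    have : B (X - X₀) (P i) ∈ Metric.ball (0 : ℝ) (min ε δ) := hX1
    rwa [mem_ball_zero_iff, Real.norm_eq_abs] at this
  have g3 := hgood _ 0 (lt_of_lt_of_le hX1' (min_le_right _ _)) z0
  simp only [zero_smul, add_zero] at g3
  have e1 : F (P i) X = F (P i) (X₀ + (B (X - X₀) (P i)) • v) :=
    hyp _ _ _ hXU g3.1 (hP i) hX2 (by simp [hv])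
  rw [← hc _ (lt_of_lt_of_le hX1' (min_le_left _ _)), ← e1]

/-- Directions in general position whose images under `f` form a basis of the span of the range
of `f`. -/
lemma Based.exists_family (hm : 2 ≤ m) (h : Based φ f) {X₀ : Fin (m + 1) → ℝ} (hX : X₀ ≠ 0) :
    ∃ (k : ℕ) (P : Fin k → Fin (m + 1) → ℝ), ((∀ j, P j ∈ QSet (m + 1)) ∧ LinearIndependent ℝ P ∧
      LinearIndependent ℝ (fun j => f (P j)) ∧ ∀ j, B X₀ (P j) ≠ 0) ∧
      ∀ p ∈ QSet (m + 1), f p ∈ Submodule.span ℝ (Set.range fun j => f (P j)) := by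
  by_contra! H
  have key : ∀ k : ℕ, ∃ P : Fin k → Fin (m + 1) → ℝ, (∀ j, P j ∈ QSet (m + 1)) ∧
      LinearIndependent ℝ P ∧ LinearIndependent ℝ (fun j => f (P j)) ∧ ∀ j, B X₀ (P j) ≠ 0 := by
    intro k
    induction k with
    | zero =>
      exact ⟨Fin.elim0, fun j => j.elim0, linearIndependent_empty_type,
        linearIndependent_empty_type, fun j => j.elim0⟩
    | succ k ih =>
      obtain ⟨P, hP⟩ := ih
      obtain ⟨p, hp, hps⟩ := H k P hP
      obtain ⟨hPQ, hLI, hLIf, hB0⟩ := hP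
      have hs : LinearIndependent ℝ (Fin.snoc (fun j => f (P j)) (f p) : Fin (k + 1) → _) :=
        linearIndependent_finSnoc.2 ⟨hLIf, hps⟩
      have hk : k + 1 ≤ m + 1 := by simpa using hs.fintype_card_le_finrank
      obtain ⟨wf, hwf⟩ := exists_dual hs (Fin.last k)
      obtain ⟨w, hw, hw0⟩ : ∃ w, (∀ j, B w (P j) = 0) ∧ w ≠ 0 := by
        have hlt : Submodule.span ℝ (Set.range P) < ⊤ := by
          refine lt_top_iff_ne_top.2 fun ht => ?_
          have h1 := finrank_span_eq_card hLI
          rw [ht, finrank_top] at h1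
          simp at h1; omega
        obtain ⟨l, hl0, hl⟩ := Submodule.exists_le_ker_of_lt_top _ hlt
        obtain ⟨w, hw⟩ := exists_rep l
        refine ⟨w, fun j => ?_, ?_⟩
        · rw [hw]; exact hl (Submodule.subset_span ⟨j, rfl⟩)
        · rintro rfl
          apply hl0
          ext y; simp [← hw]
      have hwfj : ∀ j, B wf (f (P j)) = 0 := fun j => by
        have := hwf j.castSucc
        simpa [Fin.castSucc_ne_last] using this
      have hwfp : B wf (f p) = 1 := by simpa using hwf (Fin.last k)
      have h1 : ∀ᶠ p in 𝓝[QSet (m + 1)] p, B wf (f p) ≠ 0 := by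
        have : ContinuousWithinAt (fun p => B wf (f p)) (QSet (m + 1)) p :=
          B_continuousWithinAt continuousWithinAt_const (h.contOn _ hp)
        exact this.eventually_ne (by simp [hwfp])
      obtain ⟨p₁, hp₁, e₁, n₁⟩ := dense hm hw0 hp h1
      have h2 : ∀ᶠ p in 𝓝[QSet (m + 1)] p₁, B w p ≠ 0 :=
        (B_continuousWithinAt continuousWithinAt_const continuousWithinAt_id).eventually_ne n₁
      obtain ⟨p₂, hp₂, e₂, n₂⟩ := dense hm hX hp₁ (e₁.and h2)
      have e3 := e₂.self_of_nhdsWithin hp₂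
      have hker : ∀ (v : Fin (m + 1) → ℝ) (u : Fin k → Fin (m + 1) → ℝ) (y : Fin (m + 1) → ℝ),
          (∀ j, B v (u j) = 0) → B v y ≠ 0 → y ∉ Submodule.span ℝ (Set.range u) := by
        intro v u y hu hy hmem
        have : Submodule.span ℝ (Set.range u) ≤ LinearMap.ker (B v) := by
          rw [Submodule.span_le]
          rintro _ ⟨j, rfl⟩
          exact hu j
        exact hy (this hmem)
      refine ⟨Fin.snoc P p₂, ?_, linearIndependent_finSnoc.2 ⟨hLI, hker w _ _ hw e3.2⟩, ?_, ?_⟩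
      · intro j
        refine Fin.lastCases ?_ (fun j => ?_) j
        · simpa using hp₂
        · simpa using hPQ j
      · have : (fun j => f ((Fin.snoc P p₂ : Fin (k + 1) → Fin (m + 1) → ℝ) j))
            = Fin.snoc (fun j => f (P j)) (f p₂) := by
          ext1 j
          refine Fin.lastCases ?_ (fun j => ?_) j <;> simp
        rw [this]
        exact linearIndependent_finSnoc.2 ⟨hLIf, hker wf _ _ hwfj e3.1⟩
      · intro j
        refine Fin.lastCases ?_ (fun j => ?_) j
        · simpa using n₂
        · simpa using hB0 j
  obtain ⟨P, -, hLI, -⟩ := key (m + 2)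
  have := hLI.fintype_card_le_finrank
  simp at this

/-- Modulo the orthogonal of the range of `f`, the inverted map is affine near each point of its
domain; `N` is the transpose of its linear part. -/
lemma Based.affine (hm : 2 ≤ m) (h : Based φ f) {X₀ : Fin (m + 1) → ℝ}
    (hX : B X₀ X₀ ≠ 0) (hφ : B (φ (inv X₀)) (φ (inv X₀)) ≠ 0) :
    ∃ N : (Fin (m + 1) → ℝ) →ₗ[ℝ] (Fin (m + 1) → ℝ), ∀ᶠ X in 𝓝 X₀, ∀ p ∈ QSet (m + 1),
      B (inv (φ (inv X))) (f p) - B (inv (φ (inv X₀))) (f p) = B (X - X₀) (N (f p)) := by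
  obtain ⟨k, P, ⟨hP, hLI, hLIf, hB0⟩, hspan⟩ :=
    h.exists_family hm (X₀ := X₀) (by rintro rfl; simp at hX)
  choose c hc using h.linear_coord hm hX hφ hP hLI hLIf hB0 hspan
  obtain ⟨N, hN⟩ := exists_linear hLIf (fun j => c j • P j)
  refine ⟨N, ?_⟩
  filter_upwards [eventually_all.2 hc] with X hXc p hp
  obtain ⟨α, hα⟩ := (Submodule.mem_span_range_iff_exists_fun ℝ).1 (hspan p hp)
  rw [← hα]
  simp only [map_sum, map_smul, smul_eq_mul, hN, ← Finset.sum_sub_distrib, ← mul_sub, hXc]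

/-! ### The dichotomy -/

/-- A linear map sending null vectors to null vectors multiplies the form by a constant. -/
lemma conformal (L : (Fin (m + 1) → ℝ) →ₗ[ℝ] (Fin (m + 1) → ℝ))
    (hL : ∀ p ∈ QSet (m + 1), B (L p) (L p) = 0) : ∃ κ : ℝ, ∀ y, B (L y) (L y) = κ * B y y := by
  have hL' : ∀ x, B x x = 0 → B (L x) (L x) = 0 := by
    intro x hx
    by_cases h0 : x = 0
    · simp [h0]
    obtain ⟨h1, h2⟩ := null_dir hx h0
    have := hL _ h2
    simpa [h1] using this
  let T : Fin (m + 1) → ℝ := Pi.single (Fin.last m) 1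
  have hT : ∀ y, B T y = y (Fin.last m) := by
    intro y; rw [B_apply]; simp [T, Fin.castSucc_ne_last]
  have hTT : B T T = 1 := by rw [hT]; simp [T]
  refine ⟨B (L T) (L T), fun y => ?_⟩
  set e := y - y (Fin.last m) • T with he
  have hel : e (Fin.last m) = 0 := by simp [he, T]
  have hTe : B T e = 0 := by rw [hT, hel]
  have heT : B e T = 0 := by rw [B_comm, hTe]
  have hy : y = y (Fin.last m) • T + e := by rw [he]; abel
  have hee : 0 ≤ - B e e := by
    rw [B_apply, hel]; simp
    exact Finset.sum_nonneg fun i _ => mul_self_nonneg _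
  set ρ := Real.sqrt (- B e e) with hρ
  have hρ2 : ρ * ρ = - B e e := Real.mul_self_sqrt hee
  have h1 := hL' (ρ • T + e) (by simp [hTT, hTe, heT, hρ2])
  have h2 := hL' (ρ • T - e) (by simp [hTT, hTe, heT, hρ2])
  simp only [map_add, map_sub, map_smul, LinearMap.add_apply, LinearMap.sub_apply,
    LinearMap.smul_apply, smul_eq_mul, B_comm (L e) (L T)] at h1 h2
  have h3 : B (L e) (L e) = - (ρ * ρ) * B (L T) (L T) := by linarith
  have h4 : B (L T) (L e) = 0 := by
    by_cases hρ0 : ρ = 0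
    · have : e = 0 := null_last (by rw [hρ0] at hρ2; linarith) hel
      simp [this]
    · have : ρ * B (L T) (L e) = 0 := by linarith
      exact (mul_eq_zero.1 this).resolve_left hρ0
  rw [hy]
  simp only [map_add, map_smul, LinearMap.add_apply,
    LinearMap.smul_apply, smul_eq_mul, B_comm (L e) (L T), hTT, hTe, heT, h3, h4, hρ2]
  ring

/-- Density of the directions outside a hyperplane makes `N` surjective, hence invertible; its inverse
preserves null vectors, so it is conformal, and so is `N`, which inverts `f` up to scalars. -/
lemma Based.bijOn_of_linear (hm : 2 ≤ m) (h : Based φ f)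
    (N : (Fin (m + 1) → ℝ) →ₗ[ℝ] (Fin (m + 1) → ℝ))
    (hN : ∀ p ∈ QSet (m + 1), N (f p) = (N (f p)) (Fin.last m) • p)
    {p₀ : Fin (m + 1) → ℝ} (hp₀ : p₀ ∈ QSet (m + 1)) (hN0 : N (f p₀) ≠ 0) :
    Set.BijOn f (QSet (m + 1)) (QSet (m + 1)) := by
  have hNs : Function.Surjective N := by
    rw [← LinearMap.range_eq_top]
    by_contra hr
    obtain ⟨l, hl0, hl⟩ := Submodule.exists_le_ker_of_lt_top _ (lt_top_iff_ne_top.2 hr)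
    obtain ⟨w, hw⟩ := exists_rep l
    have hw0 : w ≠ 0 := by
      rintro rfl
      apply hl0
      ext y; simp [← hw]
    have h1 : ∀ᶠ p in 𝓝[QSet (m + 1)] p₀, N (f p) ≠ 0 := by
      have hNc : Continuous N := N.continuous_of_finiteDimensional
      have : ContinuousWithinAt (fun p => N (f p)) (QSet (m + 1)) p₀ :=
        hNc.continuousAt.comp_continuousWithinAt (h.contOn _ hp₀)
      exact this.eventually_ne hN0
    obtain ⟨p, hp, e, hwp⟩ := dense hm hw0 hp₀ h1
    have hNp := e.self_of_nhdsWithin hp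
    have h2 : B w (N (f p)) = 0 := by
      rw [hw]; exact hl ⟨_, rfl⟩
    rw [hN p hp, map_smul, smul_eq_mul] at h2
    apply hNp
    rw [hN p hp, (mul_eq_zero.1 h2).resolve_right hwp, zero_smul]
  have hNi : Function.Injective N := LinearMap.injective_iff_surjective.2 hNs
  let e := LinearEquiv.ofBijective N ⟨hNi, hNs⟩
  have hlam : ∀ p ∈ QSet (m + 1), (N (f p)) (Fin.last m) ≠ 0 := by
    intro p hp h0
    have h1 := hN p hp
    rw [h0, zero_smul] at h1
    exact Q_ne (h.mem p hp) (hNi (by rw [h1, map_zero]))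
  have hfe : ∀ p ∈ QSet (m + 1), f p = (N (f p)) (Fin.last m) • e.symm p := by
    intro p hp
    rw [← map_smul, ← hN p hp]
    exact (e.symm_apply_apply (f p)).symm
  refine ⟨h.mem, ?_, ?_⟩
  · intro p hp r hr hpr
    have h1 := hN p hp
    have h2 := hN r hr
    have : (N (f p)) (Fin.last m) • p = (N (f p)) (Fin.last m) • r := by
      rw [← h1, hpr, ← h2]
    exact smul_right_injective _ (hlam p hp) this
  · intro r hr
    obtain ⟨κ, hκ⟩ := conformal (e.symm : (Fin (m + 1) → ℝ) →ₗ[ℝ] (Fin (m + 1) → ℝ)) (by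
      intro p hp
      have h1 := ((mem_Q _).1 (h.mem p hp)).2
      rw [hfe p hp] at h1
      simpa [hlam p hp] using h1)
    simp only [LinearEquiv.coe_coe] at hκ
    have hκ0 : κ ≠ 0 := by
      rintro rfl
      have := hκ (e (Pi.single (Fin.last m) 1))
      rw [e.symm_apply_apply, B_apply] at this
      simp [Fin.castSucc_ne_last] at this
    have hq : B (e r) (e r) = 0 := by
      have := hκ (e r)
      rw [e.symm_apply_apply, ((mem_Q _).1 hr).2] at this
      exact (mul_eq_zero.1 this.symm).resolve_left hκ0
    obtain ⟨h1, h2⟩ := null_dir hq (e.map_ne_zero_iff.2 (Q_ne hr))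
    refine ⟨_, h2, ?_⟩
    set p := ((e r) (Fin.last m))⁻¹ • e r with hp
    have h3 := hfe p h2
    have h4 : e.symm p = ((e r) (Fin.last m))⁻¹ • r := by
      rw [hp, map_smul, e.symm_apply_apply]
    rw [h4, smul_smul] at h3
    have h5 := congrFun h3 (Fin.last m)
    rw [Pi.smul_apply, ((mem_Q _).1 (h.mem p h2)).1, ((mem_Q _).1 hr).1, smul_eq_mul, mul_one] at h5
    rw [h3, ← h5, one_smul]

/-- Either `f` is a bijection of the sphere, or `inv ∘ φ` is locally constant modulo
the orthogonal of the range of `f`. -/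
lemma Based.dichotomy (hm : 2 ≤ m) (h : Based φ f) :
    Set.BijOn f (QSet (m + 1)) (QSet (m + 1)) ∨
    ∀ x, B x x ≠ 0 → B (φ x) (φ x) ≠ 0 → ∀ p ∈ QSet (m + 1),
      ∀ᶠ y in 𝓝 x, B (inv (φ y)) (f p) = B (inv (φ x)) (f p) := by
  by_cases hbij : Set.BijOn f (QSet (m + 1)) (QSet (m + 1))
  · exact Or.inl hbij
  right
  intro x hx hφx p hp
  have hX : B (inv x) (inv x) ≠ 0 := by rw [B_inv_inv]; exact div_ne_zero four_ne_zero hx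
  have hii := inv_inv hx
  obtain ⟨N, hN⟩ := h.affine hm hX (by rwa [hii])
  have hcont := h.cont
  have hNpar : ∀ p ∈ QSet (m + 1), B (inv x) p ≠ 0 → N (f p) = (N (f p)) (Fin.last m) • p := by
    intro p hp hB
    apply biorth hp
    intro w hw
    have ht : Tendsto (fun ε : ℝ => inv x + ε • w) (𝓝[≠] 0) (𝓝 (inv x)) := by
      have : Continuous fun ε : ℝ => inv x + ε • w := by fun_prop
      have := this.tendsto 0
      simp only [zero_smul, add_zero] at this
      exact this.mono_left nhdsWithin_le_nhds
    have hinvc := inv_continuousAt hX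
    have hGc : ContinuousAt (fun X => φ (inv X)) (inv x) :=
      ContinuousAt.comp hcont.continuousAt hinvc
    have e2 : ∀ᶠ X in 𝓝 (inv x), B (φ (inv X)) (φ (inv X)) ≠ 0 :=
      (B_continuousAt hGc hGc).eventually_ne (by rwa [hii])
    have e3 : ∀ᶠ X in 𝓝 (inv x), B X X ≠ 0 :=
      (B_continuousAt continuousAt_id continuousAt_id).eventually_ne hX
    obtain ⟨ε, ⟨⟨h1, h2⟩, h3⟩, h4⟩ :=
      ((((ht.eventually hN).and (ht.eventually e2)).and (ht.eventually e3)).and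
        self_mem_nhdsWithin).exists
    have h5 := h1 p hp
    have h6 := h.hyper hp hφx h2 hB (by rw [inv_inv h3]; simp [hw])
    rw [hii, h6, sub_self] at h5
    simp only [add_sub_cancel_left, map_smul, LinearMap.smul_apply, smul_eq_mul] at h5
    exact (mul_eq_zero.1 h5.symm).resolve_left h4
  have hNpar' : ∀ p ∈ QSet (m + 1), N (f p) = (N (f p)) (Fin.last m) • p := by
    intro p hp
    by_contra hne
    have hNc : Continuous N := N.continuous_of_finiteDimensional
    have hc1 : ContinuousWithinAt (fun p => N (f p)) (QSet (m + 1)) p :=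
      hNc.continuousAt.comp_continuousWithinAt (h.contOn _ hp)
    have hc2 : ContinuousWithinAt (fun p => N (f p) (Fin.last m)) (QSet (m + 1)) p :=
      (continuous_apply (Fin.last m)).continuousAt.comp_continuousWithinAt hc1
    have hc3 : ContinuousWithinAt (fun p => N (f p) - N (f p) (Fin.last m) • p)
        (QSet (m + 1)) p := hc1.sub (hc2.smul continuousWithinAt_id)
    obtain ⟨r, hr, e, hB⟩ := dense hm (w := inv x) (by intro h0; simp [h0] at hX) hp
      (hc3.eventually_ne (b₂ := 0) (sub_ne_zero.2 hne))
    exact e.self_of_nhdsWithin hr (sub_eq_zero.2 (hNpar r hr hB))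
  by_cases hN0 : N (f p) = 0
  swap
  · exact absurd (h.bijOn_of_linear hm N hNpar' hp hN0) hbij
  have e1 := (inv_continuousAt hx).eventually hN
  have e3 : ∀ᶠ y in 𝓝 x, B y y ≠ 0 :=
    (B_continuousAt continuousAt_id continuousAt_id).eventually_ne hx
  filter_upwards [e1, e3] with y hy hyy
  have := hy p hp
  rw [hN0, hii, inv_inv hyy, map_zero] at this
  linarith

/-! ### Excluding local constancy -/

/-- The map `inv ∘ φ` is locally constant modulo the orthogonal of the range of `f`. -/
def LocConst (φ f : (Fin (m + 1) → ℝ) → (Fin (m + 1) → ℝ)) : Prop :=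
  ∀ x, B x x ≠ 0 → B (φ x) (φ x) ≠ 0 → ∀ p ∈ QSet (m + 1),
    ∀ᶠ y in 𝓝 x, B (inv (φ y)) (f p) = B (inv (φ x)) (f p)

lemma LocConst.along (hl : LocConst φ f) {x : Fin (m + 1) → ℝ}
    (hx : B x x ≠ 0) {s₀ : ℝ} (h0 : 0 ≤ s₀)
    (hφ : ∀ s ∈ Set.Ioc s₀ 1, B (φ (s • x)) (φ (s • x)) ≠ 0)
    {p : Fin (m + 1) → ℝ} (hp : p ∈ QSet (m + 1)) {s : ℝ} (hs : s ∈ Set.Ioc s₀ 1) :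
    B (inv (φ (s • x))) (f p) = B (inv (φ x)) (f p) := by
  have : PreconnectedSpace (Set.Ioc s₀ 1) := Subtype.preconnectedSpace isPreconnected_Ioc
  have hlc : IsLocallyConstant
      (fun s : Set.Ioc s₀ 1 => B (inv (φ ((s : ℝ) • x))) (f p)) := by
    rw [IsLocallyConstant.iff_eventually_eq]
    intro s
    have hct : Continuous fun s : Set.Ioc s₀ 1 => (s : ℝ) • x := by fun_prop
    have hs0 : (s : ℝ) ≠ 0 := (h0.trans_lt s.2.1).ne'
    exact hct.continuousAt.eventually
      (hl ((s : ℝ) • x) (by simp [hs0, hx]) (hφ s s.2) p hp)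
  have := hlc.apply_eq_of_preconnectedSpace ⟨s, hs⟩ ⟨1, hs.1.trans_le hs.2, le_rfl⟩
  simpa using this

/-- Along a segment on which `q ∘ φ` does not vanish, local constancy makes `φ` constant on a
segment of each null line `ℝ p` with `B x p ≠ 0`; by continuity this includes the endpoint given by
`s₀`. -/
lemma Based.along (h : Based φ f) (hl : LocConst φ f) {x : Fin (m + 1) → ℝ}
    (hx : B x x ≠ 0) {s₀ : ℝ} (h0 : 0 ≤ s₀) (h1 : s₀ < 1)
    (hφ : ∀ s ∈ Set.Ioc s₀ 1, B (φ (s • x)) (φ (s • x)) ≠ 0)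
    {p : Fin (m + 1) → ℝ} (hp : p ∈ QSet (m + 1)) (hxp : B x p ≠ 0) :
    B (inv (φ x)) (f p) ≠ 0 ∧
      φ ((s₀ * (B (inv x) p)⁻¹) • p) = (B (inv (φ x)) (f p))⁻¹ • f p := by
  have hb : B (inv x) p ≠ 0 := by
    rw [B_inv]; exact mul_ne_zero (div_ne_zero two_ne_zero hx) hxp
  have key : ∀ s ∈ Set.Ioc s₀ 1, B (inv (φ x)) (f p) ≠ 0 ∧
      φ ((s * (B (inv x) p)⁻¹) • p) = (B (inv (φ x)) (f p))⁻¹ • f p := by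
    intro s hs
    have hs0 : s ≠ 0 := (h0.trans_lt hs.1).ne'
    have h2 : B (inv (s • x)) p = s⁻¹ * B (inv x) p := by rw [inv_smul]; simp
    have h3 := h.meet hp (hφ s hs) (by rw [h2]; exact mul_ne_zero (inv_ne_zero hs0) hb)
    rw [hl.along hx h0 hφ hp hs, h2, mul_inv, _root_.inv_inv] at h3
    exact h3
  refine ⟨(key 1 ⟨h1, le_rfl⟩).1, ?_⟩
  have hc : Continuous fun s : ℝ => φ ((s * (B (inv x) p)⁻¹) • p) := by
    have := h.cont
    fun_prop
  refine tendsto_nhds_unique ((hc.tendsto s₀).mono_left nhdsWithin_le_nhds)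
    (tendsto_const_nhds.congr' ?_ : Tendsto _ (𝓝[>] s₀) _)
  filter_upwards [Ioc_mem_nhdsGT h1] with s hs
  exact (key s hs).2.symm

/-- Local constancy is impossible if `q ∘ φ` does not vanish on some ray segment
ending at the origin. -/
lemma Based.ray (hm : 1 ≤ m) (h : Based φ f) (hl : LocConst φ f) {x : Fin (m + 1) → ℝ}
    (hx : B x x ≠ 0) (hφ : ∀ s ∈ Set.Ioc (0 : ℝ) 1, B (φ (s • x)) (φ (s • x)) ≠ 0) : False := by
  have hex : ∃ p ∈ QSet (m + 1), B x p ≠ 0 := by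
    by_contra! H
    have := Q_total hm H
    simp [this] at hx
  obtain ⟨p, hp, hxp⟩ := hex
  obtain ⟨h1, h2⟩ := h.along hl hx le_rfl zero_lt_one hφ hp hxp
  rw [zero_mul, zero_smul, h.zero] at h2
  exact (smul_ne_zero (inv_ne_zero h1) (Q_ne (h.mem p hp))) h2.symm

/-- A point off the null cone of the source whose image is off the null cone of the target. -/
lemma Pres.exists_point (h : Pres φ) (h0 : φ 0 = 0) :
    ∃ x, B x x ≠ 0 ∧ B (φ x) (φ x) ≠ 0 := by
  obtain ⟨x, hx⟩ := h.nd 0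
  rw [sub_zero] at hx
  by_cases hxx : B x x = 0
  swap
  · exact ⟨x, hxx, hx⟩
  have := h.pres 0 x (by simpa using hxx)
  simp only [h0, sub_zero] at this
  exact absurd this hx

lemma Pres.translate (h : Pres φ) (a : Fin (m + 1) → ℝ) :
    Pres fun y => φ (a + y) where
  cont := by have := h.cont; fun_prop
  pres b c hbc := h.pres _ _ (by simpa using hbc)
  nd s := by
    obtain ⟨x, hx⟩ := h.nd s
    exact ⟨x - a, by simpa using hx⟩

/-- If the induced map is not constant then it is a bijection of the sphere. -/
lemma Based.bijOn (hm : 2 ≤ m) (h : Based φ f)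
    (hne : ∃ p ∈ QSet (m + 1), ∃ p' ∈ QSet (m + 1), f p ≠ f p') :
    Set.BijOn f (QSet (m + 1)) (QSet (m + 1)) := by
  rcases h.dichotomy hm with hb | hl
  · exact hb
  exfalso
  replace hl : LocConst φ f := hl
  obtain ⟨x, hx, hφx⟩ := h.exists_point h.zero
  have hcont := h.cont
  have hqc : Continuous fun s : ℝ => B (φ (s • x)) (φ (s • x)) := by fun_prop
  -- The last zero of `q ∘ φ` on the segment from `0` to `x`.
  obtain ⟨s₀, ⟨⟨hs₀, hs₁⟩, hz⟩, hmax⟩ : ∃ s₀, IsGreatest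
      (Set.Icc (0 : ℝ) 1 ∩ {s : ℝ | B (φ (s • x)) (φ (s • x)) = 0}) s₀ :=
    (isCompact_Icc.inter_right (isClosed_eq hqc continuous_const)).exists_isGreatest
      ⟨0, ⟨le_rfl, zero_le_one⟩, by simp [h.zero]⟩
  simp only [Set.mem_ofPred_eq] at hz
  have hφ : ∀ s ∈ Set.Ioc s₀ 1, B (φ (s • x)) (φ (s • x)) ≠ 0 := fun s hs hs' =>
    absurd (hmax ⟨⟨hs₀.trans hs.1.le, hs.2⟩, hs'⟩) (not_le.2 hs.1)
  have hslt : s₀ < 1 := lt_of_le_of_ne hs₁ (by rintro rfl; simp [hφx] at hz)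
  rcases hs₀.eq_or_lt with h0 | h0
  · subst h0
    exact h.ray (by omega) hl hx hφ
  have hqt : Tendsto (fun s : ℝ => B (φ (s • x)) (φ (s • x))) (𝓝[>] s₀) (𝓝 0) := by
    rw [← hz]
    exact (hqc.tendsto s₀).mono_left nhdsWithin_le_nhds
  have hIoc : Set.Ioc s₀ 1 ∈ 𝓝[>] s₀ := Ioc_mem_nhdsGT hslt
  -- The point `s₀ x` is another zero of `φ`.
  have horth : ∀ p ∈ QSet (m + 1), B (φ (s₀ • x)) (f p) = 0 := by
    intro p hp
    have hc : Continuous fun s : ℝ => B (φ (s • x)) (f p) := by fun_prop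
    have h2 := hqt.mul_const (B (inv (φ x)) (f p) / 2)
    rw [zero_mul] at h2
    refine tendsto_nhds_unique ((hc.tendsto s₀).mono_left nhdsWithin_le_nhds)
      (h2.congr' ?_)
    filter_upwards [hIoc] with s hs
    rw [← hl.along hx hs₀ hφ hp hs, B_inv]
    have := hφ s hs
    field_simp
  have ha : φ (s₀ • x) = 0 := by
    obtain ⟨p, hp, p', hp', hpp⟩ := hne
    have e1 := null_orth hz (h.mem p hp) (horth p hp)
    have e2 := null_orth hz (h.mem p' hp') (horth p' hp')
    by_contra hne0
    have hlast := (null_dir hz hne0).1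
    rw [e1] at e2
    simp only [Pi.smul_apply, ((mem_Q _).1 (h.mem p hp)).1, smul_eq_mul, mul_one] at e2
    exact hpp (smul_right_injective _ hlast e2)
  have hpres' := h.toPres.translate (s₀ • x)
  obtain ⟨g, hg⟩ := hpres'.exists_based (by simpa using ha)
  rcases hg.dichotomy hm with hb | hl'
  swap
  · refine hg.ray (by omega) hl' (x := (1 - s₀) • x) ?_ ?_
    · have : 1 - s₀ ≠ 0 := by linarith
      simp [this, hx]
    · intro s hs
      have e : s₀ • x + s • (1 - s₀) • x = (s₀ + s * (1 - s₀)) • x := by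
        rw [smul_smul, ← add_smul]
      simp only [e]
      apply hφ
      have h3 : 0 < 1 - s₀ := by linarith
      constructor
      · have := mul_pos hs.1 h3
        linarith
      · nlinarith [hs.2]
  -- A nonzero vector orthogonal to the range of `f`.
  obtain ⟨w, hw0, hw⟩ : ∃ w : Fin (m + 1) → ℝ, w ≠ 0 ∧ ∀ p ∈ QSet (m + 1), B w (f p) = 0 := by
    by_contra! H
    have hconst : ∀ s ∈ Set.Ioc s₀ 1, B (φ (s • x)) (φ (s • x)) = B (φ x) (φ x) := by
      intro s hs
      have e : inv (φ (s • x)) = inv (φ x) := by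
        by_contra hne'
        obtain ⟨p, hp, hp'⟩ := H _ (sub_ne_zero.2 hne')
        apply hp'
        rw [map_sub, LinearMap.sub_apply, hl.along hx hs₀ hφ hp hs, sub_self]
      have e' : φ (s • x) = φ x := by rw [← inv_inv (hφ s hs), e, inv_inv hφx]
      rw [e']
    refine hφx (tendsto_nhds_unique (hqt.congr' ?_) tendsto_const_nhds).symm
    filter_upwards [hIoc] with s hs using hconst s hs
  -- For generic `r`, the null line through `s₀ x` in direction `r` meets the null cone at `0` in a
  -- point `y = c p` with `φ y ≠ 0`, so that `g r = f p`.
  have hax : B (s₀ • x) (s₀ • x) ≠ 0 := by simp [h0.ne', hx]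
  have hgf : ∀ r ∈ QSet (m + 1), B (s₀ • x) r ≠ 0 → B w (g r) = 0 := by
    intro r hr hBr
    have hrr := ((mem_Q _).1 hr).2
    set a := s₀ • x with ha'
    set t := -B a a / (2 * B a r) with ht
    set y := a + t • r with hy
    have hyy : B y y = 0 := by
      simp only [hy, map_add, LinearMap.add_apply, map_smul, LinearMap.smul_apply, hrr,
        B_comm r a, smul_eq_mul, ht]
      field_simp
      ring
    have hay : B a y = B a a / 2 := by
      simp only [hy, map_add, map_smul, smul_eq_mul, ht]
      field_simp
      ring
    have hay0 : B a y ≠ 0 := by rw [hay]; exact div_ne_zero hax two_ne_zero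
    have hy0 : y ≠ 0 := by rintro h; simp [h] at hay0
    obtain ⟨hl1, hp⟩ := null_dir hyy hy0
    set c := y (Fin.last m) with hc
    set p := c⁻¹ • y with hpdef
    have hyp : y = c • p := by rw [hpdef, smul_smul, mul_inv_cancel₀ hl1, one_smul]
    have hxp : B x p ≠ 0 := by
      intro h5
      apply hay0
      rw [hyp, ha']
      simp [h5]
    obtain ⟨h6, h7⟩ := h.along hl hx hs₀ hslt hφ hp hxp
    have hcs : s₀ * (B (inv x) p)⁻¹ = c := by
      rw [hyp, map_smul] at hay
      simp only [ha', map_smul, LinearMap.smul_apply, smul_eq_mul] at hay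
      rw [B_inv]
      have h8 : c * B x p = s₀ * B x x / 2 := by
        apply mul_left_cancel₀ h0.ne'
        linarith
      field_simp
      linarith
    rw [hcs, ← hyp] at h7
    have h9 : g r = f p := hg.eq_dir hr (h.mem p hp) (t := t) h7 (by
      change φ y ≠ 0
      rw [h7]
      exact smul_ne_zero (inv_ne_zero h6) (Q_ne (h.mem p hp)))
    rw [h9]
    exact hw p hp
  have hgw : ∀ r ∈ QSet (m + 1), B w (g r) = 0 := by
    intro r hr
    by_contra hne'
    have hc : ContinuousWithinAt (fun r => B w (g r)) (QSet (m + 1)) r :=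
      B_continuousWithinAt continuousWithinAt_const (hg.contOn r hr)
    obtain ⟨r', hr', e, hB⟩ := dense hm (w := s₀ • x) (by intro h0; simp [h0] at hax) hr
      (hc.eventually_ne hne')
    exact e.self_of_nhdsWithin hr' (hgf r' hr' hB)
  refine hw0 (Q_total (by omega) fun r hr => ?_)
  obtain ⟨u, hu, rfl⟩ := hb.surjOn hr
  exact hgw u hu

/-! ### The homeomorphism -/

lemma Q_compact : IsCompact (QSet (m + 1)) := by
  have hQ : QSet (m + 1) = {p | p (Fin.last m) = 1 ∧ B p p = 0} := Set.ext mem_Q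
  refine (isCompact_univ_pi (s := fun _ : Fin (m + 1) => Set.Icc (-1 : ℝ) 1)
    fun _ => isCompact_Icc).of_isClosed_subset ?_ ?_
  · rw [hQ]
    exact (isClosed_eq (continuous_apply _) continuous_const).inter
      (isClosed_eq (by fun_prop) continuous_const)
  · intro p hp i _
    obtain ⟨h1, h2⟩ := (mem_Q p).1 hp
    rw [B_apply, h1] at h2
    induction i using Fin.lastCases with
    | last => simp [h1]
    | cast j =>
      have := Finset.single_le_sum (f := fun i : Fin m => p i.castSucc * p i.castSucc)
        (fun i _ => mul_self_nonneg _) (Finset.mem_univ j)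
      have h3 : p j.castSucc ^ 2 ≤ 1 := by nlinarith
      exact ⟨(abs_le.1 ((sq_le_one_iff_abs_le_one _).1 h3)).1,
        (abs_le.1 ((sq_le_one_iff_abs_le_one _).1 h3)).2⟩

lemma Based.exists_homeo (h : Based φ f) (hb : Set.BijOn f (QSet (m + 1)) (QSet (m + 1))) :
    ∃ e : (QSet (m + 1)) ≃ₜ (QSet (m + 1)), ∀ p : QSet (m + 1), (e p : Fin (m + 1) → ℝ) = f p := by
  have : CompactSpace (QSet (m + 1)) := isCompact_iff_compactSpace.1 Q_compact
  have hc : Continuous (hb.equiv f) := h.contOn.mapsToRestrict hb.mapsTo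
  exact ⟨hc.homeoOfEquivCompactToT2, fun p => rfl⟩

end Coherency

open Coherency in
theorem generic_nondegenerate_preserver_induced_map_is_homeomorphism
    (n : ℕ) (hn : 4 ≤ n) (φ : (Fin n → ℝ) → (Fin n → ℝ))
    (hcont : Continuous φ)
    (hpres : ∀ a b : Fin n → ℝ, mq n (b - a) = 0 → mq n (φ b - φ a) = 0)
    (hnd : ¬ ∃ s' : Fin n → ℝ, ∀ x : Fin n → ℝ, mq n (φ x - s') = 0)
    (h0 : φ 0 = 0)
    (hnc : ∃ ψ : (Fin n → ℝ) → (Fin n → ℝ), IsInducedMap n φ 0 ψ ∧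
       ∃ p ∈ QSet n, ∃ p' ∈ QSet n, ψ p ≠ ψ p')
    (hgen : interior (φ ⁻¹' {0}) = ∅) :
    ∀ ψ : (Fin n → ℝ) → (Fin n → ℝ), IsInducedMap n φ 0 ψ →
      ∃ e : (QSet n) ≃ₜ (QSet n), ∀ p : QSet n, (e p : Fin n → ℝ) = ψ p := by
  intro ψ hψ
  obtain ⟨m, rfl⟩ : ∃ m, n = m + 1 := ⟨n - 1, by omega⟩
  have hP : Pres φ := by
    refine ⟨hcont, fun a b hab => ?_, fun s => ?_⟩
    · rw [← mq_eq] at hab ⊢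
      exact hpres a b hab
    · by_contra! H
      exact hnd ⟨s, fun x => by rw [mq_eq]; exact H x⟩
  have hbased : ∀ ψ, IsInducedMap (m + 1) φ 0 ψ → Based φ ψ := fun ψ hψ =>
    { hP with
      zero := h0
      mem := fun p hp => (hψ p hp).1
      line := fun p hp t => by simpa [h0] using (hψ p hp).2 t }
  obtain ⟨ψ', hψ', p, hp, p', hp', hne⟩ := hnc
  have hB := hbased ψ hψ
  have hB' := hbased ψ' hψ'
  refine hB.exists_homeo (hB.bijOn (by omega) ⟨p, hp, p', hp', ?_⟩)
  rwa [hB.unique hB' hp, hB.unique hB' hp']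
end

section
/- Let n ≥ 4 and let φ : ℝⁿ → ℝⁿ be a continuous, non-degenerate coherency preserver for the form q(x₁,…,xₙ) = xₙ² − (x₁² + ⋯ + x_{n−1}²). Assume φ(0) = 0, the induced map φ_0 : 𝒬 → 𝒬 is nonconstant, and 0 is generic (the preimage φ⁻¹({0}) has empty interior). Then for every a ∈ ℝⁿ the induced map φ_a : 𝒬 → 𝒬 is nonconstant, i.e., there exist p, p′ ∈ 𝒬 with φ_a(p) ≠ φ_a(p′). -/
/-! ### The polar form and null vectors -/

/-- The polar form of `mq n`, normalised so that `mB n x x = mq n x`. -/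
noncomputable def mB (n : ℕ) : (Fin n → ℝ) →ₗ[ℝ] (Fin n → ℝ) →ₗ[ℝ] ℝ :=
  LinearMap.mk₂ ℝ
    (fun x y => ∑ i : Fin n, (if (i : ℕ) = n - 1 then (1 : ℝ) else -1) * (x i * y i))
    (by intros; simp only [Pi.add_apply, add_mul, mul_add, Finset.sum_add_distrib])
    (by
      intros; simp only [Pi.smul_apply, smul_eq_mul, Finset.mul_sum]
      exact Finset.sum_congr rfl fun _ _ => by ring)
    (by intros; simp only [Pi.add_apply, mul_add, Finset.sum_add_distrib])
    (by
      intros; simp only [Pi.smul_apply, smul_eq_mul, Finset.mul_sum]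
      exact Finset.sum_congr rfl fun _ _ => by ring)

lemma mB_apply (n : ℕ) (x y : Fin n → ℝ) :
    mB n x y = ∑ i : Fin n, (if (i : ℕ) = n - 1 then (1 : ℝ) else -1) * (x i * y i) := rfl

lemma mq_eq (n : ℕ) (x : Fin n → ℝ) : mq n x = mB n x x := by
  simp only [mq, mB_apply, sq]

lemma mB_comm (n : ℕ) (x y : Fin n → ℝ) : mB n x y = mB n y x := by
  simp only [mB_apply, mul_comm]

lemma mq_add (n : ℕ) (x y : Fin n → ℝ) : mq n (x + y) = mq n x + 2 * mB n x y + mq n y := by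
  simp only [mq_eq, map_add, LinearMap.add_apply, mB_comm n y x]; ring

lemma mq_sub (n : ℕ) (x y : Fin n → ℝ) : mq n (x - y) = mq n x - 2 * mB n x y + mq n y := by
  simp only [mq_eq, map_sub, LinearMap.sub_apply, mB_comm n y x]; ring

lemma mq_smul (n : ℕ) (t : ℝ) (x : Fin n → ℝ) : mq n (t • x) = t ^ 2 * mq n x := by
  simp only [mq_eq, map_smul, LinearMap.smul_apply, smul_eq_mul]; ring

lemma continuous_mq (n : ℕ) : Continuous (mq n) := by
  unfold mq; fun_prop

lemma continuous_mB_left (n : ℕ) (u : Fin n → ℝ) : Continuous fun x => mB n x u := by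
  simp only [mB_apply]; fun_prop

/-- Splitting off the last coordinate, the index of which is written `L`. -/
lemma mq_split (n : ℕ) (L : Fin n) (hL : (L : ℕ) = n - 1) (x : Fin n → ℝ) :
    mq n x = x L ^ 2 - ∑ i : Fin n, if (i : ℕ) = n - 1 then 0 else x i ^ 2 := by
  have h : x L ^ 2 = ∑ i : Fin n, if (i : ℕ) = n - 1 then x i ^ 2 else 0 := by
    rw [Finset.sum_eq_single L]
    · simp [hL]
    · intro b _ hb
      rw [if_neg]
      intro h; exact hb (Fin.ext (h.trans hL.symm))
    · simp
  rw [h, ← Finset.sum_sub_distrib]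
  refine Finset.sum_congr rfl fun i _ => ?_
  split_ifs <;> ring

lemma mem_QSet_iff (n : ℕ) (L : Fin n) (hL : (L : ℕ) = n - 1) (p : Fin n → ℝ) :
    p ∈ QSet n ↔ p L = 1 ∧ mq n p = 0 := by
  have h1 : (∀ i : Fin n, (i : ℕ) = n - 1 → p i = 1) ↔ p L = 1 := by
    constructor
    · intro h; exact h L hL
    · intro h i hi
      rw [show i = L from Fin.ext (hi.trans hL.symm)]; exact h
  simp only [QSet, Set.mem_ofPred_eq, h1, mq_split n L hL]
  constructor
  · rintro ⟨h, h'⟩; exact ⟨h, by rw [h, h']; norm_num⟩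
  · rintro ⟨h, h'⟩; exact ⟨h, by rw [h] at h'; linarith⟩

/-- The form is definite on the hyperplane where the last coordinate vanishes. -/
lemma eq_zero_of_last (n : ℕ) (L : Fin n) (hL : (L : ℕ) = n - 1) (x : Fin n → ℝ)
    (hx : mq n x = 0) (h : x L = 0) : x = 0 := by
  rw [mq_split n L hL, h] at hx
  have h0 : ∑ i : Fin n, (if (i : ℕ) = n - 1 then 0 else x i ^ 2) = 0 := by linarith
  rw [Finset.sum_eq_zero_iff_of_nonneg (fun i _ => by split_ifs <;> positivity)] at h0
  funext i
  have := h0 i (Finset.mem_univ _)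
  split_ifs at this with hi
  · rw [show i = L from Fin.ext (hi.trans hL.symm)]; exact h
  · simpa using this

/-- Orthogonal null vectors are parallel. -/
lemma parallel_of_orthogonal (n : ℕ) (L : Fin n) (hL : (L : ℕ) = n - 1) (d u : Fin n → ℝ)
    (hd : mq n d = 0) (hu : mq n u = 0) (hB : mB n d u = 0) (hu0 : u ≠ 0) :
    ∃ s : ℝ, d = s • u := by
  have huL : u L ≠ 0 := fun h => hu0 (eq_zero_of_last n L hL u hu h)
  refine ⟨d L / u L, ?_⟩
  rw [← sub_eq_zero]
  apply eq_zero_of_last n L hL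
  · rw [mq_sub, mq_smul, map_smul, hd, hu, hB]; simp
  · simp [huL]

lemma QSet_eq_of_smul (n : ℕ) (L : Fin n) (hL : (L : ℕ) = n - 1) (p p' : Fin n → ℝ)
    (hp : p ∈ QSet n) (hp' : p' ∈ QSet n) (s : ℝ) (h : p = s • p') : p = p' := by
  rw [mem_QSet_iff n L hL] at hp hp'
  have := congrFun h L
  simp only [Pi.smul_apply, smul_eq_mul, hp.1, hp'.1, mul_one] at this
  rw [h, ← this, one_smul]

lemma QSet_ne_zero (n : ℕ) (L : Fin n) (hL : (L : ℕ) = n - 1) (p : Fin n → ℝ)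
    (hp : p ∈ QSet n) : p ≠ 0 := by
  rintro rfl
  rw [mem_QSet_iff n L hL] at hp
  simp at hp

/-! ### Cones and transversal null lines -/

/-- The points `x` for which the line `x + ℝd` meets `C(a)` transversally are dense. -/
lemma dense_transversal (n : ℕ) (L : Fin n) (hL : (L : ℕ) = n - 1) (d a : Fin n → ℝ)
    (hd : d L ≠ 0) : Dense {x : Fin n → ℝ | mB n (x - a) d ≠ 0} := by
  intro x
  by_cases hx : mB n (x - a) d = 0
  swap
  · exact subset_closure hx
  have hBd : mB n (Pi.single L 1) d = d L := by
    rw [mB_apply, Finset.sum_eq_single L]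
    · simp [hL]
    · intro b _ hb; simp [hb]
    · simp
  have hc : Continuous fun ε : ℝ => x + ε • (Pi.single L 1 : Fin n → ℝ) := by fun_prop
  have hm : (0 : ℝ) ∈ closure ({0}ᶜ : Set ℝ) := by
    rw [closure_compl_singleton]; trivial
  have := map_mem_closure hc hm (t := {x : Fin n → ℝ | mB n (x - a) d ≠ 0}) (by
    intro ε hε
    simp only [Set.mem_ofPred_eq]
    rw [show x + ε • (Pi.single L 1 : Fin n → ℝ) - a = (x - a) + ε • Pi.single L 1 by abel,
      map_add, LinearMap.add_apply, hx, map_smul, LinearMap.smul_apply, hBd, zero_add, smul_eq_mul]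
    exact mul_ne_zero hε hd)
  simpa using this

lemma eq_zero_of_transversal (n : ℕ) (L : Fin n) (hL : (L : ℕ) = n - 1) (d a : Fin n → ℝ)
    (hd : d L ≠ 0) (F : (Fin n → ℝ) → ℝ) (hF : Continuous F)
    (h : ∀ x, mB n (x - a) d ≠ 0 → F x = 0) (x : Fin n → ℝ) : F x = 0 := by
  have := Continuous.ext_on (dense_transversal n L hL d a hd) hF continuous_const
    (fun x hx => h x hx)
  exact congrFun this x

/-- A transversal null line meets the cone `C(a)`. -/
lemma exists_cone_point (n : ℕ) (d a x : Fin n → ℝ) (hd : mq n d = 0)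
    (h : mB n (x - a) d ≠ 0) : ∃ t : ℝ, mq n (x + t • d - a) = 0 := by
  refine ⟨-mq n (x - a) / (2 * mB n (x - a) d), ?_⟩
  rw [show ∀ t : ℝ, x + t • d - a = (x - a) + t • d by intro t; abel, mq_add, mq_smul, map_smul,
    hd, smul_eq_mul]
  field_simp
  ring

/-- If `φ` were constant on a null line, almost every point would be coherent to a point of it,
so `φ` would be degenerate. -/
lemma exists_ne_on_line (n : ℕ) (L : Fin n) (hL : (L : ℕ) = n - 1)
    (φ : (Fin n → ℝ) → (Fin n → ℝ)) (hcont : Continuous φ)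
    (hpres : ∀ a b : Fin n → ℝ, mq n (b - a) = 0 → mq n (φ b - φ a) = 0)
    (hnd : ¬ ∃ s' : Fin n → ℝ, ∀ x : Fin n → ℝ, mq n (φ x - s') = 0)
    (a d : Fin n → ℝ) (hd : mq n d = 0) (hdL : d L ≠ 0) : ∃ t : ℝ, φ (a + t • d) ≠ φ a := by
  by_contra! hcon
  refine hnd ⟨φ a, fun x => ?_⟩
  refine eq_zero_of_transversal n L hL d a hdL (fun x => mq n (φ x - φ a))
    ((continuous_mq n).comp (hcont.sub continuous_const)) (fun x hx => ?_) x
  obtain ⟨t, ht⟩ := exists_cone_point n d a x hd hx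
  have h := hpres (a + (-t) • d) x (by
    rw [← ht]; congr 1; rw [neg_smul]; abel)
  rwa [hcon] at h

/-! ### Cones mapped into a null line -/

/-- The relation satisfied by the images of coherent points `x`, `x + d` when `φ` maps the cone
`C(a)` into the null line `w + ℝu`. -/
lemma cone_relation (n : ℕ) (L : Fin n) (hL : (L : ℕ) = n - 1)
    (φ : (Fin n → ℝ) → (Fin n → ℝ)) (hcont : Continuous φ)
    (hpres : ∀ a b : Fin n → ℝ, mq n (b - a) = 0 → mq n (φ b - φ a) = 0)
    (a w u : Fin n → ℝ) (hu : mq n u = 0)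
    (hbad : ∀ y, mq n (y - a) = 0 → ∃ s : ℝ, φ y = w + s • u)
    (d : Fin n → ℝ) (hd : mq n d = 0) (x : Fin n → ℝ) :
    mq n (φ (x + d) - w) * mB n (φ x - w) u = mq n (φ x - w) * mB n (φ (x + d) - w) u := by
  by_cases hdL : d L = 0
  · rw [eq_zero_of_last n L hL d hd hdL, add_zero]
  have hc1 : Continuous fun x => φ x - w := hcont.sub continuous_const
  have hc2 : Continuous fun x => φ (x + d) - w := hc1.comp (continuous_id.add continuous_const)
  rw [← sub_eq_zero]
  refine eq_zero_of_transversal n L hL d a hdL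
    (fun x => mq n (φ (x + d) - w) * mB n (φ x - w) u
      - mq n (φ x - w) * mB n (φ (x + d) - w) u)
    ((((continuous_mq n).comp hc2).mul ((continuous_mB_left n u).comp hc1)).sub
      (((continuous_mq n).comp hc1).mul ((continuous_mB_left n u).comp hc2))) (fun x hx => ?_) x
  obtain ⟨t, ht⟩ := exists_cone_point n d a x hd hx
  obtain ⟨s, hs⟩ := hbad _ ht
  have h1 := hpres (x + t • d) x (by
    rw [show x - (x + t • d) = (-t) • d by rw [neg_smul]; abel, mq_smul, hd, mul_zero])
  have h2 := hpres (x + t • d) (x + d) (by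
    rw [show x + d - (x + t • d) = (1 - t) • d by rw [sub_smul, one_smul]; abel, mq_smul, hd,
      mul_zero])
  rw [hs, ← sub_sub, mq_sub, mq_smul, map_smul, hu, smul_eq_mul] at h1 h2
  linear_combination (mB n (φ x - w) u) * h2 - (mB n (φ (x + d) - w) u) * h1

/-- A cone mapped into a null line forces the line to pass through the image of every point with
nonconstant induced map (here the point `0`, fixed by `φ`). -/
lemma zero_mem_line (n : ℕ) (L : Fin n) (hL : (L : ℕ) = n - 1)
    (φ : (Fin n → ℝ) → (Fin n → ℝ)) (hcont : Continuous φ)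
    (hpres : ∀ a b : Fin n → ℝ, mq n (b - a) = 0 → mq n (φ b - φ a) = 0)
    (hnd : ¬ ∃ s' : Fin n → ℝ, ∀ x : Fin n → ℝ, mq n (φ x - s') = 0)
    (h0 : φ 0 = 0) (ψ : (Fin n → ℝ) → (Fin n → ℝ)) (hψ : IsInducedMap n φ 0 ψ)
    (p p' : Fin n → ℝ) (hp : p ∈ QSet n) (hp' : p' ∈ QSet n) (hne : ψ p ≠ ψ p')
    (a w u : Fin n → ℝ) (hu : u ∈ QSet n)
    (hbad : ∀ y, mq n (y - a) = 0 → ∃ s : ℝ, φ y = w + s • u) :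
    ∃ s : ℝ, w = s • u := by
  have hu1 := (mem_QSet_iff n L hL u).1 hu
  set g : Fin n → ℝ := (2 * mB n w u) • w - (mq n w) • u with hg
  have hgq : mq n g = 0 := by
    rw [hg, mq_sub, mq_smul, mq_smul, map_smul, LinearMap.map_smul₂, hu1.2]
    simp only [smul_eq_mul]; ring
  have horth : ∀ r ∈ QSet n, mB n (ψ r) g = 0 := by
    intro r hr
    have hr1 := (mem_QSet_iff n L hL r).1 hr
    have hψr := (mem_QSet_iff n L hL _).1 (hψ r hr).1
    obtain ⟨t, ht⟩ := exists_ne_on_line n L hL φ hcont hpres hnd 0 r hr1.2 (by rw [hr1.1]; simp)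
    obtain ⟨s, hs⟩ := (hψ r hr).2 t
    rw [h0, zero_add (s • ψ r)] at hs
    have hs0 : s ≠ 0 := by
      rintro rfl
      rw [hs, h0, zero_smul] at ht; exact ht rfl
    have hG := cone_relation n L hL φ hcont hpres a w u hu1.2 hbad (t • r)
      (by rw [mq_smul, hr1.2, mul_zero]) 0
    rw [hs, h0, mq_sub, mq_sub, mq_smul, hψr.2] at hG
    simp only [map_sub, map_smul, LinearMap.sub_apply, LinearMap.smul_apply, smul_eq_mul, map_zero,
      LinearMap.zero_apply] at hG
    have hz : mq n (0 : Fin n → ℝ) = 0 := by rw [mq_eq]; simp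
    rw [hz] at hG
    have : s * mB n (ψ r) g = 0 := by
      rw [hg]
      simp only [map_sub, map_smul, smul_eq_mul]
      linear_combination hG
    exact (mul_eq_zero.1 this).resolve_left hs0
  by_cases hg0 : g = 0
  · by_cases hB : mB n w u = 0
    · rw [hg, hB, mul_zero, zero_smul, zero_sub, neg_eq_zero, smul_eq_zero] at hg0
      have hqw := hg0.resolve_right (QSet_ne_zero n L hL u hu)
      exact parallel_of_orthogonal n L hL w u hqw hu1.2 hB (QSet_ne_zero n L hL u hu)
    · refine ⟨(2 * mB n w u)⁻¹ * mq n w, ?_⟩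
      rw [hg, sub_eq_zero] at hg0
      rw [mul_smul, ← hg0, inv_smul_smul₀ (mul_ne_zero two_ne_zero hB)]
  · exfalso
    obtain ⟨s, hs⟩ := parallel_of_orthogonal n L hL g (ψ p) hgq
      ((mem_QSet_iff n L hL _).1 (hψ p hp).1).2
      (by rw [mB_comm]; exact horth p hp) (QSet_ne_zero n L hL _ (hψ p hp).1)
    obtain ⟨s', hs'⟩ := parallel_of_orthogonal n L hL (ψ p') g
      ((mem_QSet_iff n L hL _).1 (hψ p' hp').1).2 hgq (horth p' hp') hg0
    rw [hs, smul_smul] at hs'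
    exact hne (QSet_eq_of_smul n L hL _ _ (hψ p' hp').1 (hψ p hp).1 _ hs').symm

/-- If `φ` maps `C(a)` into `ℝu` and `φ x` is a nonzero point of another null line `ℝv`, then `φ`
maps `C(x)` into `ℝv`. -/
lemma cone_transfer (n : ℕ) (L : Fin n) (hL : (L : ℕ) = n - 1)
    (φ : (Fin n → ℝ) → (Fin n → ℝ)) (hcont : Continuous φ)
    (hpres : ∀ a b : Fin n → ℝ, mq n (b - a) = 0 → mq n (φ b - φ a) = 0)
    (a u v x : Fin n → ℝ) (hu : mq n u = 0) (hv : mq n v = 0) (huv : mB n v u ≠ 0)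
    (hbad : ∀ y, mq n (y - a) = 0 → ∃ s : ℝ, φ y = 0 + s • u)
    (r : ℝ) (hr : r ≠ 0) (hx : φ x = r • v) (y : Fin n → ℝ) (hy : mq n (y - x) = 0) :
    ∃ s : ℝ, φ y = s • v := by
  have hv0 : v ≠ 0 := by rintro rfl; simp at huv
  have hG := cone_relation n L hL φ hcont hpres a 0 u hu hbad (y - x) hy x
  rw [add_sub_cancel, sub_zero, sub_zero, hx, mq_smul, hv, mul_zero, zero_mul, map_smul,
    LinearMap.smul_apply, smul_eq_mul] at hG
  have hqy : mq n (φ y) = 0 := (mul_eq_zero.1 hG).resolve_right (mul_ne_zero hr huv)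
  have h := hpres x y hy
  rw [hx, mq_sub, mq_smul, hv, hqy, map_smul, smul_eq_mul] at h
  refine parallel_of_orthogonal n L hL (φ y) v hqy hv ?_ hv0
  have : r * mB n (φ y) v = 0 := by linarith
  exact (mul_eq_zero.1 this).resolve_left hr

theorem generic_nondegenerate_preserver_all_induced_maps_nonconstant
    (n : ℕ) (hn : 4 ≤ n) (φ : (Fin n → ℝ) → (Fin n → ℝ))
    (hcont : Continuous φ)
    (hpres : ∀ a b : Fin n → ℝ, mq n (b - a) = 0 → mq n (φ b - φ a) = 0)
    (hnd : ¬ ∃ s' : Fin n → ℝ, ∀ x : Fin n → ℝ, mq n (φ x - s') = 0)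
    (h0 : φ 0 = 0)
    (hnc : ∃ ψ : (Fin n → ℝ) → (Fin n → ℝ), IsInducedMap n φ 0 ψ ∧
       ∃ p ∈ QSet n, ∃ p' ∈ QSet n, ψ p ≠ ψ p')
    (hgen : interior (φ ⁻¹' {0}) = ∅) :
    ∀ a : Fin n → ℝ, ∀ ψ : (Fin n → ℝ) → (Fin n → ℝ), IsInducedMap n φ a ψ →
      ∃ p ∈ QSet n, ∃ p' ∈ QSet n, ψ p ≠ ψ p' := by
  intro a χ hχ
  by_contra! hconst
  obtain ⟨L, hL⟩ : ∃ L : Fin n, (L : ℕ) = n - 1 := ⟨⟨n - 1, by omega⟩, rfl⟩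
  obtain ⟨ψ, hψ, p, hp, p', hp', hne⟩ := hnc
  -- `u` is the constant value of the induced map at `a`.
  set u := χ p with hudef
  have huQ : u ∈ QSet n := (hχ p hp).1
  have hu := (mem_QSet_iff n L hL u).1 huQ
  have hbad : ∀ y, mq n (y - a) = 0 → ∃ s : ℝ, φ y = φ a + s • u := by
    intro y hy
    by_cases hyL : (y - a) L = 0
    · refine ⟨0, ?_⟩
      rw [sub_eq_zero.1 (eq_zero_of_last n L hL _ hy hyL)]; simp
    have hQ : ((y - a) L)⁻¹ • (y - a) ∈ QSet n := by
      rw [mem_QSet_iff n L hL, mq_smul, hy]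
      refine ⟨?_, by simp⟩
      rw [Pi.smul_apply, smul_eq_mul, inv_mul_cancel₀ hyL]
    obtain ⟨s, hs⟩ := (hχ _ hQ).2 ((y - a) L)
    rw [smul_inv_smul₀ hyL, add_sub_cancel, ← hconst p hp _ hQ] at hs
    exact ⟨s, hs⟩
  obtain ⟨s₀, hs₀⟩ := zero_mem_line n L hL φ hcont hpres hnd h0 ψ hψ p p' hp hp' hne a (φ a) u huQ
    hbad
  have hbad0 : ∀ y, mq n (y - a) = 0 → ∃ s : ℝ, φ y = 0 + s • u := by
    intro y hy
    obtain ⟨s, hs⟩ := hbad y hy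
    exact ⟨s₀ + s, by rw [hs, hs₀, add_smul, zero_add]⟩
  obtain ⟨r, hr, hru⟩ : ∃ r ∈ QSet n, ψ r ≠ u := by
    by_cases h : ψ p = u
    · exact ⟨p', hp', fun h' => hne (h.trans h'.symm)⟩
    · exact ⟨p, hp, h⟩
  have hrq := (mem_QSet_iff n L hL r).1 hr
  have hvQ := (hψ r hr).1
  have hv := (mem_QSet_iff n L hL _).1 hvQ
  have hrL : r L ≠ 0 := by rw [hrq.1]; exact one_ne_zero
  have huv : mB n (ψ r) u ≠ 0 := by
    intro h
    obtain ⟨s, hs⟩ := parallel_of_orthogonal n L hL _ u hv.2 hu.2 h (QSet_ne_zero n L hL u huQ)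
    exact hru (QSet_eq_of_smul n L hL _ _ hvQ huQ s hs)
  obtain ⟨t, ht⟩ := exists_ne_on_line n L hL φ hcont hpres hnd 0 r hrq.2 hrL
  obtain ⟨k, hk⟩ := (hψ r hr).2 t
  have hk0 : k ≠ 0 := by
    rintro rfl
    rw [zero_smul, add_zero] at hk; exact ht hk
  rw [h0, zero_add (k • ψ r)] at hk
  set x := 0 + t • r with hxdef
  have hbadx := cone_transfer n L hL φ hcont hpres a u (ψ r) x hu.2 hv.2 huv hbad0 k hk0 hk
  refine hnd ⟨0, fun z => ?_⟩
  refine eq_zero_of_transversal n L hL r x hrL (fun z => mq n (φ z - 0))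
    ((continuous_mq n).comp (hcont.sub continuous_const)) (fun z hz => ?_) z
  obtain ⟨c, hc⟩ := exists_cone_point n r x z hrq.2 hz
  obtain ⟨s, hs⟩ := hbadx _ hc
  have hG := cone_relation n L hL φ hcont hpres a 0 u hu.2 hbad0 (c • r)
    (by rw [mq_smul, hrq.2, mul_zero]) z
  have h1 := hpres z (z + c • r) (by rw [add_sub_cancel_left, mq_smul, hrq.2, mul_zero])
  simp only [sub_zero]
  rw [sub_zero, sub_zero, hs, mq_smul, hv.2, mul_zero, zero_mul, map_smul, LinearMap.smul_apply,
    smul_eq_mul] at hG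
  rcases mul_eq_zero.1 hG.symm with h | h
  · exact h
  · -- Here the common neighbour is mapped to `0`.
    have hs0 : s = 0 := (mul_eq_zero.1 h).resolve_right huv
    rw [hs, hs0, zero_smul, mq_sub, mq_eq n 0] at h1
    simpa using h1
end

section
/- Let n ≥ 4 and let φ : ℝⁿ → ℝⁿ be a continuous, non-degenerate coherency preserver for the form q(x₁,…,xₙ) = xₙ² − (x₁² + ⋯ + x_{n−1}²). Assume φ(0) = 0, the induced map φ_0 : 𝒬 → 𝒬 is nonconstant, and 0 is generic (the preimage φ⁻¹({0}) has empty interior). Then every point of ℝⁿ is generic for φ: for every b ∈ ℝⁿ, the preimage φ⁻¹({b}) has empty interior; equivalently, φ is not constant on any nonempty open subset of ℝⁿ. -/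
open Topology Filter

/-- The properties of the Minkowski bilinear form used in the proof: it is symmetric, continuous and
nondegenerate, orthogonal null vectors are proportional, and for any two nonzero null vectors there
is a null vector `k` orthogonal to neither of them, together with a non-null vector orthogonal to
`k` (which expresses that the dimension is at least three). -/
structure IsLorentzian {V : Type*} [NormedAddCommGroup V] [NormedSpace ℝ V]
    (B : LinearMap.BilinForm ℝ V) : Prop where
  symm : ∀ x y, B x y = B y x
  cont : Continuous fun z : V × V => B z.1 z.2
  nondeg : ∀ p, p ≠ 0 → ∃ m, B m p ≠ 0
  prop : ∀ u v, u ≠ 0 → B u u = 0 → B v v = 0 → B u v = 0 → ∃ c : ℝ, v = c • u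
  aux : ∀ p p₂, p ≠ 0 → p₂ ≠ 0 → B p p = 0 → B p₂ p₂ = 0 →
    ∃ k w, B k k = 0 ∧ B w k = 0 ∧ B w w ≠ 0 ∧ B p k ≠ 0 ∧ B p₂ k ≠ 0

/-! ### Coherency preservers for a Lorentzian form -/

section core

variable {V : Type*} [NormedAddCommGroup V] [NormedSpace ℝ V]
  {B : LinearMap.BilinForm ℝ V}

/-- If a property spreads from `x` to `x + t • p`, for `p` in a spanning set, as long as one stays in
a ball around `x₀`, then it spreads from `x₀` to a neighbourhood: nearby points are reached by moving
along the vectors of a basis one after the other. -/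
lemma eventually_of_span [FiniteDimensional ℝ V] {S : Set V} (hS : Submodule.span ℝ S = ⊤)
    {P : V → Prop} {x₀ : V} {δ : ℝ} (hδ : 0 < δ) (h₀ : P x₀)
    (hstep : ∀ x ∈ Metric.ball x₀ δ, P x → ∀ p ∈ S, ∀ t : ℝ,
      x + t • p ∈ Metric.ball x₀ δ → P (x + t • p)) :
    ∀ᶠ x in 𝓝 x₀, P x := by
  classical
  obtain ⟨T, hTS, b, hb⟩ : ∃ T : Set V, T ⊆ S ∧ ∃ b : Module.Basis T ℝ V, ∀ i, b i = i := by
    obtain ⟨T, hT, hsp, hli⟩ := exists_linearIndependent ℝ S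
    refine ⟨T, hT, Module.Basis.mk hli (by rw [Subtype.range_coe, hsp, hS]), fun i => by simp⟩
  have : Fintype T := FiniteDimensional.fintypeBasisIndex b
  have hc : Continuous fun x => ∑ i, |b.repr (x - x₀) i| * ‖b i‖ := by
    refine continuous_finsetSum _ fun i _ => ?_
    have : Continuous fun x => b.repr x i := (b.coord i).continuous_of_finiteDimensional
    fun_prop
  have he : ∀ᶠ x in 𝓝 x₀, ∑ i, |b.repr (x - x₀) i| * ‖b i‖ < δ :=
    hc.continuousAt.eventually_lt continuousAt_const (by simpa using hδ)
  filter_upwards [he] with x hx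
  have hball : ∀ F : Finset T, x₀ + ∑ i ∈ F, b.repr (x - x₀) i • b i ∈ Metric.ball x₀ δ := by
    intro F
    rw [Metric.mem_ball, dist_eq_norm, add_sub_cancel_left]
    refine lt_of_le_of_lt (norm_sum_le _ _) (lt_of_le_of_lt ?_ hx)
    simp only [norm_smul, Real.norm_eq_abs]
    exact Finset.sum_le_sum_of_subset_of_nonneg (Finset.subset_univ _) fun _ _ _ => by positivity
  have key : ∀ F : Finset T, P (x₀ + ∑ i ∈ F, b.repr (x - x₀) i • b i) := by
    intro F
    induction F using Finset.induction_on with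
    | empty => simpa using h₀
    | insert a F ha ih =>
      have h2 := hball (insert a F)
      rw [Finset.sum_insert ha, add_comm (_ • _), ← add_assoc] at h2 ⊢
      exact hstep _ (hball F) ih _ (by rw [hb]; exact hTS a.2) _ h2
  have := key Finset.univ
  rwa [b.sum_repr, add_sub_cancel] at this

/-- Parametrization of the null vectors with `B p k = 1` by the convex set of all `v` with
`B v k = 1`. -/
lemma null_lift (hB : IsLorentzian B) {k v : V} (hk : B k k = 0) (hv : B v k = 1) :
    B (v - (B v v / 2) • k) (v - (B v v / 2) • k) = 0 := by
  have := hB.symm k v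
  simp only [map_sub, map_smul, LinearMap.sub_apply, LinearMap.smul_apply, smul_eq_mul]
  rw [this, hv, hk]; ring

/-- The null vectors in a neighbourhood of a nonzero null vector `p₀` span the whole space. With
`B p₀ k = 1` and `w` orthogonal to `k`, the null curve
`ε ↦ p₀ + ε w - (ε B p₀ w + ε² B w w / 2) k` passes through `p₀`; its odd part gives
`w - B p₀ w • k`, its even part gives `k`. -/
lemma span_null_near (hB : IsLorentzian B) {p₀ : V} (hp : p₀ ≠ 0) (hp0 : B p₀ p₀ = 0)
    {N : Set V} (hN : N ∈ 𝓝 p₀) :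
    Submodule.span ℝ {p | B p p = 0 ∧ p ∈ N} = ⊤ := by
  obtain ⟨k₀, w₀, hk₀, hwk₀, hw₀, hpk₀, -⟩ := hB.aux p₀ p₀ hp hp hp0 hp0
  obtain ⟨k, hk, hwk, hpk⟩ : ∃ k, B k k = 0 ∧ B w₀ k = 0 ∧ B p₀ k = 1 := by
    refine ⟨(B p₀ k₀)⁻¹ • k₀, ?_, ?_, ?_⟩ <;> simp [hk₀, hwk₀, hpk₀]
  set M := Submodule.span ℝ {p | B p p = 0 ∧ p ∈ N}
  have hM : ∀ w, B w k = 0 → w - B p₀ w • k ∈ M ∧ B w w • k ∈ M := by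
    intro w hw
    have hcB : Continuous fun v : V => B v v := hB.cont.comp (by fun_prop : Continuous fun v : V => (v, v))
    let g : ℝ → V := fun ε => (p₀ + ε • w) - (B (p₀ + ε • w) (p₀ + ε • w) / 2) • k
    have hg : Continuous g := by
      have : Continuous fun ε : ℝ => B (p₀ + ε • w) (p₀ + ε • w) := hcB.comp (by fun_prop)
      exact (by fun_prop : Continuous fun ε : ℝ => p₀ + ε • w).sub
        ((this.div_const 2).smul continuous_const)
    have hg0 : g 0 = p₀ := by simp [g, hp0]
    have hev : ∀ᶠ ε in 𝓝 (0 : ℝ), g ε ∈ N := hg.continuousAt (by rwa [hg0])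
    have hev' : ∀ᶠ ε in 𝓝 (0 : ℝ), g (-ε) ∈ N := by
      have : Tendsto (fun ε : ℝ => -ε) (𝓝 0) (𝓝 0) := by
        simpa using (continuous_neg (G := ℝ)).tendsto 0
      exact this.eventually hev
    obtain ⟨ε, ⟨h1, h2⟩, hε⟩ := (((hev.and hev').filter_mono nhdsWithin_le_nhds).and
      (self_mem_nhdsWithin (s := Set.Ioi (0 : ℝ)))).exists
    have hε0 : ε ≠ 0 := ne_of_gt hε
    have hnull : ∀ e : ℝ, B (g e) (g e) = 0 := fun e => null_lift hB hk (by simp [hpk, hw])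
    have m1 : g ε ∈ M := Submodule.subset_span ⟨hnull _, h1⟩
    have m2 : g (-ε) ∈ M := Submodule.subset_span ⟨hnull _, h2⟩
    have m0 : p₀ ∈ M := Submodule.subset_span ⟨hp0, mem_of_mem_nhds hN⟩
    have e : ∀ e : ℝ, g e = p₀ + e • w - (e * B p₀ w + e ^ 2 * B w w / 2) • k := by
      intro e
      have := hB.symm w p₀
      simp only [g, map_add, map_smul, LinearMap.add_apply, LinearMap.smul_apply, smul_eq_mul]
      rw [this, hp0]; congr 2; ring
    constructor
    · have : w - B p₀ w • k = (2 * ε)⁻¹ • (g ε - g (-ε)) := by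
        rw [e, e, eq_inv_smul_iff₀ (by positivity)]; module
      rw [this]; exact M.smul_mem _ (M.sub_mem m1 m2)
    · have : B w w • k = (-(ε ^ 2)⁻¹) • (g ε + g (-ε) - (2 : ℝ) • p₀) := by
        rw [e, e]
        match_scalars <;> field_simp <;> ring
      rw [this]; exact M.smul_mem _ (M.sub_mem (M.add_mem m1 m2) (M.smul_mem _ m0))
  have hkM : k ∈ M := by
    have := M.smul_mem (B w₀ w₀)⁻¹ (hM w₀ hwk).2
    rwa [inv_smul_smul₀ hw₀] at this
  refine eq_top_iff.2 fun v _ => ?_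
  have h1 := (hM (v - B v k • p₀) (by simp [hpk])).1
  have m0 : p₀ ∈ M := Submodule.subset_span ⟨hp0, mem_of_mem_nhds hN⟩
  have h2 := M.add_mem (M.add_mem h1 (M.smul_mem (B p₀ (v - B v k • p₀)) hkM))
    (M.smul_mem (B v k) m0)
  convert h2 using 1; abel

/-- Three pairwise coherent points `0`, `x`, `z` with `x ≠ 0` are collinear, so whatever is orthogonal
to `x` is orthogonal to `z`. -/
lemma null_step (hB : IsLorentzian B) {x z y : V} (hx : x ≠ 0) (hxx : B x x = 0)
    (hzz : B z z = 0) (hxz : B (z - x) (z - x) = 0) (hy : B x y = 0) : B z y = 0 := by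
  have h : B x z = 0 := by
    have := hB.symm x z
    simp only [map_sub, LinearMap.sub_apply] at hxz
    linarith
  obtain ⟨c, rfl⟩ := hB.prop x z hx hxx hzz h
  simp [hy]

variable {φ : V → V}

/-- A non-degenerate coherency preserver is not constant on any null line. -/
lemma exists_ne_on_line_s19 (hB : IsLorentzian B) (hφ : Continuous φ)
    (hpres : ∀ a b, B (b - a) (b - a) = 0 → B (φ b - φ a) (φ b - φ a) = 0)
    (hnd : ¬ ∃ s, ∀ x, B (φ x - s) (φ x - s) = 0)
    (a : V) {p : V} (hp : p ≠ 0) (hpp : B p p = 0) : ∃ t : ℝ, φ (a + t • p) ≠ φ a := by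
  by_contra! hc
  refine hnd ⟨φ a, ?_⟩
  -- such an `x` is coherent with exactly one point of the line `a + ℝ p`
  have h1 : ∀ x, B (x - a) p ≠ 0 → B (φ x - φ a) (φ x - φ a) = 0 := by
    intro x hx
    rw [← hc (B (x - a) (x - a) / (2 * B (x - a) p))]
    apply hpres
    rw [← sub_sub]
    have := hB.symm p (x - a)
    generalize x - a = v at *
    simp only [map_sub, map_smul, LinearMap.sub_apply, LinearMap.smul_apply, smul_eq_mul]
    rw [this, hpp]; field_simp; ring
  intro x
  by_cases hx : B (x - a) p = 0
  swap
  · exact h1 x hx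
  obtain ⟨m, hm⟩ := hB.nondeg p hp
  have hc2 : Continuous fun e : ℝ => B (φ (x + e • m) - φ a) (φ (x + e • m) - φ a) :=
    hB.cont.comp (by fun_prop :
      Continuous fun e : ℝ => (φ (x + e • m) - φ a, φ (x + e • m) - φ a))
  have h2 : Tendsto (fun e : ℝ => B (φ (x + e • m) - φ a) (φ (x + e • m) - φ a)) (𝓝[≠] 0)
      (𝓝 (B (φ x - φ a) (φ x - φ a))) := by
    have := hc2.tendsto 0
    simp only [zero_smul, add_zero] at this
    exact this.mono_left nhdsWithin_le_nhds
  refine tendsto_nhds_unique h2 (tendsto_const_nhds.congr' ?_)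
  filter_upwards [self_mem_nhdsWithin] with e he
  refine (h1 _ ?_).symm
  have : x + e • m - a = (x - a) + e • m := by abel
  rw [this, map_add, LinearMap.add_apply, hx]; simpa [hm] using he

/-- If `φ = b` on the open set `U`, the pairs `(u, p)` for which the image of `u + ℝ p` stays in
`b + yᗮ` form a relatively open set of pairs of a point of `U` and a null vector. -/
lemma locally_aligned [FiniteDimensional ℝ V] (hB : IsLorentzian B) (hφ : Continuous φ)
    (hpres : ∀ a b, B (b - a) (b - a) = 0 → B (φ b - φ a) (φ b - φ a) = 0)
    (hnd : ¬ ∃ s, ∀ x, B (φ x - s) (φ x - s) = 0)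
    {U : Set V} (hU : IsOpen U) {b : V} (hUb : ∀ u ∈ U, φ u = b) (y : V)
    {u₀ p₀ : V} (hu₀ : u₀ ∈ U) (hp : p₀ ≠ 0) (hpp : B p₀ p₀ = 0)
    (hA : ∀ t : ℝ, B (φ (u₀ + t • p₀) - b) y = 0) :
    ∀ᶠ z : V × V in 𝓝 (u₀, p₀), z.1 ∈ U → B z.2 z.2 = 0 →
      ∀ t : ℝ, B (φ (z.1 + t • z.2) - b) y = 0 := by
  obtain ⟨t, ht⟩ := exists_ne_on_line_s19 hB hφ hpres hnd u₀ hp hpp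
  rw [hUb u₀ hu₀] at ht
  have hnull : ∀ u ∈ U, ∀ p, B p p = 0 → ∀ s : ℝ,
      B (φ (u + s • p) - b) (φ (u + s • p) - b) = 0 := by
    intro u hu p hp s
    rw [← hUb u hu]; apply hpres; simp [hp]
  have hpair : ∀ u p, B p p = 0 → ∀ s s' : ℝ,
      B (φ (u + s' • p) - b - (φ (u + s • p) - b)) (φ (u + s' • p) - b - (φ (u + s • p) - b)) = 0 := by
    intro u p hp s s'
    rw [sub_sub_sub_cancel_right]; apply hpres
    rw [add_sub_add_left_eq_sub, ← sub_smul]; simp [hp]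
  have hne : ∀ᶠ x in 𝓝 (u₀ + t • p₀), φ x ≠ b := hφ.continuousAt.eventually_ne ht
  have hgood : ∀ᶠ x in 𝓝 (u₀ + t • p₀), B (φ x - b) y = 0 := by
    have hU2 : ∀ᶠ z : V × V in 𝓝 (u₀ + t • p₀, p₀), z.1 - t • z.2 ∈ U := by
      have hc : Continuous fun z : V × V => z.1 - t • z.2 := by fun_prop
      exact hc.continuousAt (hU.mem_nhds (by simpa using hu₀))
    rw [nhds_prod_eq] at hU2
    obtain ⟨P, hP, Q, hQ, hPQ⟩ := eventually_prod_iff.1 hU2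
    obtain ⟨δ, hδ, hball⟩ := Metric.eventually_nhds_iff_ball.1 (hP.and hne)
    refine eventually_of_span (span_null_near hB hp hpp (N := {p | Q p}) hQ) hδ (hA t) ?_
    rintro x hx hPx p ⟨hp0, hpQ⟩ s -
    have hu := hPQ (hball x hx).1 hpQ
    -- the line through `x` in direction `p` meets `U` in `x - t • p`
    have e1 : x = (x - t • p) + t • p := by abel
    have e2 : x + s • p = (x - t • p) + (t + s) • p := by module
    have n1 := hnull _ hu p hp0 t
    have n2 := hnull _ hu p hp0 (t + s)
    have n3 := hpair (x - t • p) p hp0 t (t + s)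
    simp only at n1 n2 n3
    rw [← e1] at n1 n3
    rw [← e2] at n2 n3
    exact null_step hB (sub_ne_zero.2 (hball x hx).2) n1 n2 n3 hPx
  have hc : Continuous fun z : V × V => z.1 + t • z.2 := by fun_prop
  have := (hc.continuousAt (x := (u₀, p₀))).eventually (hgood.and hne)
  filter_upwards [this] with z hz hzU hz0 s
  exact null_step hB (sub_ne_zero.2 hz.2) (hnull _ hzU _ hz0 t) (hnull _ hzU _ hz0 s)
    (hpair _ _ hz0 t s) hz.1

/-- If `φ = b` on the convex open set `U` and the image of one null line through `U` lies in
`b + yᗮ`, so do the images of all null lines through `U`: the condition is open and closed along a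
path of null lines joining the given one to any other. -/
lemma aligned_all [FiniteDimensional ℝ V] (hB : IsLorentzian B) (hφ : Continuous φ)
    (hpres : ∀ a b, B (b - a) (b - a) = 0 → B (φ b - φ a) (φ b - φ a) = 0)
    (hnd : ¬ ∃ s, ∀ x, B (φ x - s) (φ x - s) = 0)
    {U : Set V} (hU : IsOpen U) (hconv : Convex ℝ U) {b : V} (hUb : ∀ u ∈ U, φ u = b) (y : V)
    {u₀ p₀ : V} (hu₀ : u₀ ∈ U) (hp : p₀ ≠ 0) (hpp : B p₀ p₀ = 0)
    (hA : ∀ t : ℝ, B (φ (u₀ + t • p₀) - b) y = 0)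
    {u₁ p₁ : V} (hu₁ : u₁ ∈ U) (hp' : p₁ ≠ 0) (hpp' : B p₁ p₁ = 0) :
    ∀ t : ℝ, B (φ (u₁ + t • p₁) - b) y = 0 := by
  obtain ⟨k, -, hk, -, -, hk0, hk1⟩ := hB.aux p₀ p₁ hp hp' hpp hpp'
  let u : unitInterval → V := fun τ => (1 - (τ : ℝ)) • u₀ + (τ : ℝ) • u₁
  let v : unitInterval → V := fun τ =>
    (1 - (τ : ℝ)) • (B p₀ k)⁻¹ • p₀ + (τ : ℝ) • (B p₁ k)⁻¹ • p₁
  let p : unitInterval → V := fun τ => v τ - (B (v τ) (v τ) / 2) • k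
  have huc : Continuous u := by fun_prop
  have hvc : Continuous v := by fun_prop
  have hpc : Continuous p := by
    have : Continuous fun τ => B (v τ) (v τ) := hB.cont.comp (hvc.prodMk hvc)
    exact hvc.sub ((this.div_const 2).smul continuous_const)
  have hvk : ∀ τ, B (v τ) k = 1 := fun τ => by simp [v, hk0, hk1]
  have hpn : ∀ τ, B (p τ) (p τ) = 0 := fun τ => null_lift hB hk (hvk τ)
  have hp0 : ∀ τ, p τ ≠ 0 := by
    intro τ h
    have : B (p τ) k = 1 := by simp [p, hvk, hk]
    rw [h] at this; simp at this
  have hu : ∀ τ, u τ ∈ U := fun τ =>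
    hconv hu₀ hu₁ (sub_nonneg.2 τ.2.2) τ.2.1 (by ring)
  let A : Set unitInterval := {τ | ∀ t : ℝ, B (φ (u τ + t • p τ) - b) y = 0}
  have hcl : IsClosed A := by
    simp only [A, Set.ofPred_forall]
    refine isClosed_iInter fun t => isClosed_eq ?_ continuous_const
    exact hB.cont.comp (by fun_prop : Continuous fun τ => (φ (u τ + t • p τ) - b, y))
  have hop : IsOpen A := by
    rw [isOpen_iff_mem_nhds]
    intro τ hτ
    have := locally_aligned hB hφ hpres hnd hU hUb y (hu τ) (hp0 τ) (hpn τ) hτ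
    have := ((huc.prodMk hpc).continuousAt (x := τ)).eventually this
    filter_upwards [this] with σ hσ using hσ (hu σ) (hpn σ)
  have h0A : (0 : unitInterval) ∈ A := by
    intro t
    have e1 : u 0 = u₀ := by simp [u]
    have e2 : p 0 = (B p₀ k)⁻¹ • p₀ := by simp [p, v, hpp]
    rw [e1, e2, smul_smul]; exact hA _
  have h1A : (1 : unitInterval) ∈ A := by
    rw [IsClopen.eq_univ ⟨hcl, hop⟩ ⟨_, h0A⟩]; trivial
  intro t
  have h := h1A (t * B p₁ k)
  have e1 : u 1 = u₁ := by simp [u]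
  have e2 : p 1 = (B p₁ k)⁻¹ • p₁ := by simp [p, v, hpp']
  rwa [e1, e2, smul_smul, mul_assoc, mul_inv_cancel₀ hk1, mul_one] at h

/-- If `φ = b` on the convex open set `U`, all points coherent with some point of `U` are mapped into
one null line through `b`. -/
lemma exists_common_line [FiniteDimensional ℝ V] (hB : IsLorentzian B) (hφ : Continuous φ)
    (hpres : ∀ a b, B (b - a) (b - a) = 0 → B (φ b - φ a) (φ b - φ a) = 0)
    (hnd : ¬ ∃ s, ∀ x, B (φ x - s) (φ x - s) = 0)
    {U : Set V} (hU : IsOpen U) (hconv : Convex ℝ U) {b : V} (hUb : ∀ u ∈ U, φ u = b)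
    {u₀ p₀ : V} (hu₀ : u₀ ∈ U) (hp : p₀ ≠ 0) (hpp : B p₀ p₀ = 0) :
    ∃ y, y ≠ 0 ∧ B y y = 0 ∧ ∀ u ∈ U, ∀ x, B (x - u) (x - u) = 0 → ∃ c : ℝ, φ x = b + c • y := by
  obtain ⟨t, ht⟩ := exists_ne_on_line_s19 hB hφ hpres hnd u₀ hp hpp
  have hy : φ (u₀ + t • p₀) - b ≠ 0 := by rwa [hUb u₀ hu₀, ← sub_ne_zero] at ht
  have hyy : B (φ (u₀ + t • p₀) - b) (φ (u₀ + t • p₀) - b) = 0 := by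
    have h := hpres u₀ (u₀ + t • p₀) (by simp [hpp])
    rwa [hUb u₀ hu₀] at h
  refine ⟨_, hy, hyy, fun u hu x hx => ?_⟩
  set y := φ (u₀ + t • p₀) - b with hydef
  have hA : ∀ s : ℝ, B (φ (u₀ + s • p₀) - b) y = 0 := by
    intro s
    refine null_step hB hy hyy ?_ ?_ hyy
    · rw [← hUb u₀ hu₀]; apply hpres; simp [hpp]
    · rw [hydef, sub_sub_sub_cancel_right]; apply hpres
      rw [add_sub_add_left_eq_sub, ← sub_smul]; simp [hpp]
  by_cases hxu : x - u = 0
  · exact ⟨0, by rw [sub_eq_zero.1 hxu, hUb u hu]; simp⟩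
  have h1 := aligned_all hB hφ hpres hnd hU hconv hUb y hu₀ hp hpp hA hu hxu hx 1
  rw [one_smul, add_sub_cancel] at h1
  have h2 : B (φ x - b) (φ x - b) = 0 := by rw [← hUb u hu]; exact hpres _ _ hx
  obtain ⟨c, hc⟩ := hB.prop _ _ hy hyy h2 (by rw [hB.symm]; exact h1)
  exact ⟨c, by rw [← hc]; abel⟩

/-- Every null line through `0` contains a point coherent with some point of the nonempty open set
`U`. -/
lemma exists_line_point (hB : IsLorentzian B) {U : Set V} (hU : IsOpen U) {u₀ : V} (hu₀ : u₀ ∈ U)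
    {p : V} (hp : p ≠ 0) (hpp : B p p = 0) :
    ∃ t : ℝ, ∃ u ∈ U, B (t • p - u) (t • p - u) = 0 := by
  obtain ⟨u, hu, hup⟩ : ∃ u ∈ U, B u p ≠ 0 := by
    by_cases h : B u₀ p = 0
    swap
    · exact ⟨u₀, hu₀, h⟩
    obtain ⟨m, hm⟩ := hB.nondeg p hp
    have hc : Continuous fun e : ℝ => u₀ + e • m := by fun_prop
    have : ∀ᶠ e in 𝓝[>] (0 : ℝ), u₀ + e • m ∈ U :=
      (hc.continuousAt.eventually (hU.mem_nhds (by simpa using hu₀))).filter_mono nhdsWithin_le_nhds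
    obtain ⟨e, he, he0⟩ := (this.and self_mem_nhdsWithin).exists
    have he1 : e ≠ 0 := ne_of_gt he0
    exact ⟨_, he, by simp [h, hm, he1]⟩
  refine ⟨B u u / (2 * B u p), u, hu, ?_⟩
  have := hB.symm p u
  simp only [map_sub, map_smul, LinearMap.sub_apply, LinearMap.smul_apply, smul_eq_mul]
  rw [this, hpp]; field_simp; ring

/-- Suppose that `φ` maps a neighbourhood of `x₀` into the null line `b + ℝ y`, and that some null line
through `x₀` has an image not orthogonal to `y`. Then `φ` is constant near `x₀`, since every null line
close to that one meets the neighbourhood in a set whose image lies on two distinct null lines. -/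
lemma locally_constant_of_transverse [FiniteDimensional ℝ V] (hB : IsLorentzian B)
    (hφ : Continuous φ)
    (hpres : ∀ a b, B (b - a) (b - a) = 0 → B (φ b - φ a) (φ b - φ a) = 0)
    {b y : V} (hyy : B y y = 0) {x₀ p : V} (hp : p ≠ 0) (hpp : B p p = 0)
    (hW : ∀ᶠ x in 𝓝 x₀, ∃ c : ℝ, φ x = b + c • y)
    {t : ℝ} (ht : B (φ (x₀ + t • p) - φ x₀) y ≠ 0) :
    ∀ᶠ x in 𝓝 x₀, φ x = φ x₀ := by
  have hc : Continuous fun z : V × V => B (φ (z.1 + t • z.2) - φ z.1) y :=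
    hB.cont.comp (by fun_prop : Continuous fun z : V × V => (φ (z.1 + t • z.2) - φ z.1, y))
  have hne : ∀ᶠ z in 𝓝 (x₀, p), B (φ (z.1 + t • z.2) - φ z.1) y ≠ 0 :=
    hc.continuousAt.eventually_ne ht
  rw [nhds_prod_eq] at hne
  obtain ⟨P, hP, Q, hQ, hPQ⟩ := eventually_prod_iff.1 hne
  obtain ⟨δ, hδ, hball⟩ := Metric.eventually_nhds_iff_ball.1 (hP.and hW)
  refine eventually_of_span (span_null_near hB hp hpp (N := {p | Q p}) hQ) hδ rfl ?_
  rintro x hx hPx p' ⟨hp0, hpQ⟩ s hs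
  rw [← hPx]
  have h1 := hPQ (hball x hx).1 hpQ
  obtain ⟨c, hc⟩ := (hball x hx).2
  obtain ⟨c', hc'⟩ := (hball _ hs).2
  have h2 := hpres x (x + t • p') (by simp [hp0])
  have h3 := hpres (x + s • p') (x + t • p')
    (by rw [add_sub_add_left_eq_sub, ← sub_smul]; simp [hp0])
  have h4 : φ (x + t • p') - φ (x + s • p') = (φ (x + t • p') - φ x) - (c' - c) • y := by
    rw [hc, hc']; module
  rw [h4] at h3
  simp only at h1
  generalize φ (x + t • p') - φ x = X at *
  have h5 := hB.symm y X
  simp only [map_sub, map_smul, LinearMap.sub_apply, LinearMap.smul_apply, smul_eq_mul] at h3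
  rw [h2, h5, hyy] at h3
  have h6 : (c' - c) * B X y = 0 := by linarith
  rcases mul_eq_zero.1 h6 with h | h
  · rw [hc, hc', sub_eq_zero.1 h]
  · exact absurd h h1

/-- The theorem for an abstract Lorentzian form; `r` and `r'` are the values at `p` and `p'` of the
map induced at `0`. -/
theorem core_generic [FiniteDimensional ℝ V] (hB : IsLorentzian B) (hφ : Continuous φ)
    (hpres : ∀ a b, B (b - a) (b - a) = 0 → B (φ b - φ a) (φ b - φ a) = 0)
    (hnd : ¬ ∃ s, ∀ x, B (φ x - s) (φ x - s) = 0)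
    {p p' r r' : V} (hp : p ≠ 0) (hpp : B p p = 0) (hp' : p' ≠ 0)
    (hpp' : B p' p' = 0) (hr : B r r = 0) (hr' : B r' r' = 0) (hrr : B r r' ≠ 0)
    (hl : ∀ t : ℝ, ∃ s : ℝ, φ (t • p) = s • r) (hl' : ∀ t : ℝ, ∃ s : ℝ, φ (t • p') = s • r')
    (hgen : interior (φ ⁻¹' {0}) = ∅) (b : V) : interior (φ ⁻¹' {b}) = ∅ := by
  by_contra hne
  obtain ⟨u₀, hu₀⟩ := Set.nonempty_iff_ne_empty.2 hne
  obtain ⟨δ, hδ, hball⟩ := Metric.isOpen_iff.1 isOpen_interior u₀ hu₀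
  set U := Metric.ball u₀ δ
  have hU : IsOpen U := Metric.isOpen_ball
  have huU : u₀ ∈ U := Metric.mem_ball_self hδ
  have hUb : ∀ u ∈ U, φ u = b := fun u hu => by
    simpa using interior_subset (hball hu)
  obtain ⟨y, hy, hyy, hL⟩ := exists_common_line hB hφ hpres hnd hU (convex_ball _ _) hUb huU hp hpp
  obtain ⟨t, u, hu, htu⟩ := exists_line_point hB hU huU hp hpp
  obtain ⟨t', u', hu', htu'⟩ := exists_line_point hB hU huU hp' hpp'
  have hsr : B r r' = B r' r := hB.symm _ _
  -- the points `φ (t • p)` and `φ (t' • p')` of the common line are coherent, so one of them is `0`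
  obtain ⟨c₀, hc₀⟩ : ∃ c : ℝ, b = c • y := by
    obtain ⟨s, hs⟩ := hl t
    obtain ⟨s', hs'⟩ := hl' t'
    obtain ⟨c, hc⟩ := hL u hu _ htu
    obtain ⟨c', hc'⟩ := hL u' hu' _ htu'
    have h1 : s • r - s' • r' = (c - c') • y := by rw [← hs, ← hs', hc, hc']; module
    have h2 : B (s • r - s' • r') (s • r - s' • r') = 0 := by rw [h1]; simp [hyy]
    simp only [map_sub, map_smul, LinearMap.sub_apply, LinearMap.smul_apply, smul_eq_mul] at h2
    rw [hr, hr', ← hsr] at h2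
    have h3 : s * s' * B r r' = 0 := by linarith
    rcases mul_eq_zero.1 h3 with h | h
    · rcases mul_eq_zero.1 h with h | h
      · refine ⟨-c, ?_⟩
        rw [hs, h, zero_smul] at hc
        rw [neg_smul]; exact eq_neg_of_add_eq_zero_left hc.symm
      · refine ⟨-c', ?_⟩
        rw [hs', h, zero_smul] at hc'
        rw [neg_smul]; exact eq_neg_of_add_eq_zero_left hc'.symm
    · exact absurd h hrr
  -- a null direction whose image line is transverse to `ℝ y` forces `0` to be non-generic
  have key : ∀ q z : V, q ≠ 0 → B q q = 0 → B z y ≠ 0 →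
      (∀ t : ℝ, ∃ s : ℝ, φ (t • q) = s • z) → False := by
    intro q z hq hqq hz hlq
    obtain ⟨t, u, hu, htu⟩ := exists_line_point hB hU huU hq hqq
    have hx0 : φ (t • q) = 0 := by
      obtain ⟨s, hs⟩ := hlq t
      obtain ⟨c, hc⟩ := hL u hu _ htu
      have h1 : B (φ (t • q)) y = 0 := by rw [hc, hc₀]; simp [hyy]
      rw [hs] at h1 ⊢
      have : s = 0 := by simpa [hz] using h1
      simp [this]
    obtain ⟨t₁, ht₁⟩ := exists_ne_on_line_s19 hB hφ hpres hnd (t • q) hq hqq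
    have htr : B (φ (t • q + t₁ • q) - φ (t • q)) y ≠ 0 := by
      rw [hx0] at ht₁ ⊢
      rw [← add_smul] at ht₁ ⊢
      obtain ⟨s, hs⟩ := hlq (t + t₁)
      rw [hs] at ht₁ ⊢
      have : s ≠ 0 := fun h => ht₁ (by simp [h])
      simp [this, hz]
    have hW : ∀ᶠ x in 𝓝 (t • q), ∃ c : ℝ, φ x = b + c • y := by
      have hc : Continuous fun x : V => u + (x - t • q) := by fun_prop
      have : ∀ᶠ x in 𝓝 (t • q), u + (x - t • q) ∈ U :=
        hc.continuousAt.eventually (hU.mem_nhds (by simpa using hu))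
      filter_upwards [this] with x hx
      refine hL _ hx x ?_
      have e : x - (u + (x - t • q)) = t • q - u := by abel
      rw [e, htu]
    have hloc := locally_constant_of_transverse hB hφ hpres hyy hq hqq hW htr
    have : t • q ∈ interior (φ ⁻¹' {0}) := by
      rw [mem_interior_iff_mem_nhds]
      filter_upwards [hloc] with x hx
      rw [Set.mem_preimage, hx, hx0]; rfl
    rw [hgen] at this; exact this
  by_cases h1 : B r y = 0
  · refine key p' r' hp' hpp' (fun h2 => hrr ?_) hl'
    obtain ⟨c, hc⟩ := hB.prop y r hy hyy hr (by rw [hB.symm]; exact h1)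
    rw [hc]; simp [hB.symm y r', h2]
  · exact key p r hp hpp h1 hl

end core

/-! ### The standard Minkowski form -/

section concrete

/-- The bilinear form `x_T y_T - ∑_{i ≠ T} x_i y_i` on `ℝⁿ`, with time coordinate `T`. -/
def minkowskiForm (n : ℕ) (T : Fin n) : LinearMap.BilinForm ℝ (Fin n → ℝ) :=
  LinearMap.mk₂ ℝ (fun x y => x T * y T - ∑ i ∈ Finset.univ.erase T, x i * y i)
    (fun x x' y => by simp [add_mul, Finset.sum_add_distrib]; ring)
    (fun c x y => by simp [mul_assoc, ← Finset.mul_sum]; ring)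
    (fun x y y' => by simp [mul_add, Finset.sum_add_distrib]; ring)
    (fun c x y => by simp [mul_left_comm, ← Finset.mul_sum]; ring)

lemma minkowskiForm_apply {n : ℕ} (T : Fin n) (x y : Fin n → ℝ) :
    minkowskiForm n T x y = x T * y T - ∑ i ∈ Finset.univ.erase T, x i * y i := rfl

lemma minkowskiForm_single_time {n : ℕ} (T : Fin n) (x : Fin n → ℝ) :
    minkowskiForm n T x (Pi.single T 1) = x T := by
  rw [minkowskiForm_apply, Finset.sum_eq_zero]
  · simp
  · intro i hi
    simp [Pi.single_eq_of_ne (Finset.ne_of_mem_erase hi)]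

lemma minkowskiForm_single_space {n : ℕ} {T j : Fin n} (hj : j ≠ T) (x : Fin n → ℝ) :
    minkowskiForm n T x (Pi.single j 1) = -x j := by
  rw [minkowskiForm_apply, Finset.sum_eq_single_of_mem j (by simp [hj])]
  · simp [Pi.single_eq_of_ne hj.symm]
  · intro i _ hij
    simp [Pi.single_eq_of_ne hij]

lemma isLorentzian_minkowskiForm {n : ℕ} {T i j : Fin n} (hi : i ≠ T) (hj : j ≠ T) (hij : i ≠ j) :
    IsLorentzian (minkowskiForm n T) := by
  have symm : ∀ x y, minkowskiForm n T x y = minkowskiForm n T y x := by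
    intro x y
    simp only [minkowskiForm_apply, mul_comm]
  have zero : ∀ x : Fin n → ℝ, minkowskiForm n T x x = 0 → x T = 0 → x = 0 := by
    intro x hx hT
    rw [minkowskiForm_apply, hT, mul_zero, zero_sub, neg_eq_zero,
      Finset.sum_eq_zero_iff_of_nonneg fun _ _ => mul_self_nonneg _] at hx
    ext l
    by_cases hl : l = T
    · rw [hl, hT]; rfl
    · simpa using hx l (by simp [hl])
  refine ⟨symm, ?_, ?_, ?_, ?_⟩
  · simp only [minkowskiForm_apply]; fun_prop
  · intro p hp
    by_contra! h
    refine hp (funext fun l => ?_)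
    by_cases hl : l = T
    · have := h (Pi.single T 1)
      rw [symm, minkowskiForm_single_time] at this
      rw [hl, this]; rfl
    · have := h (Pi.single l 1)
      rw [symm, minkowskiForm_single_space hl] at this
      simpa using this
  · intro u v hu huu hvv huv
    have hT : u T ≠ 0 := fun h => hu (zero u huu h)
    refine ⟨v T / u T, sub_eq_zero.1 (zero _ ?_ ?_)⟩
    · simp only [map_sub, map_smul, LinearMap.sub_apply, LinearMap.smul_apply, smul_eq_mul]
      rw [symm v u, huu, hvv, huv]; ring
    · simp [hT]
  · intro p p' hp hp' hpp hpp'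
    have hne : ∀ x : Fin n → ℝ, x ≠ 0 → minkowskiForm n T x x = 0 →
        x T ≠ 0 ∧ x i ^ 2 + x j ^ 2 ≤ x T ^ 2 := by
      intro x hx hxx
      refine ⟨fun h => hx (zero x hxx h), ?_⟩
      have h1 : ∑ l ∈ ({i, j} : Finset (Fin n)), x l * x l ≤
          ∑ l ∈ Finset.univ.erase T, x l * x l :=
        Finset.sum_le_sum_of_subset_of_nonneg (by intro l; simp; rintro (rfl | rfl) <;> assumption)
          fun _ _ _ => mul_self_nonneg _
      rw [Finset.sum_pair hij] at h1
      rw [minkowskiForm_apply] at hxx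
      linarith
    -- the null vectors `e_T ± e_l`, each with the orthogonal spacelike vector `e_m`
    have cand : ∀ (l m : Fin n) (s : ℝ), l ≠ T → m ≠ T → m ≠ l → s ^ 2 = 1 →
        p T - s * p l ≠ 0 → p' T - s * p' l ≠ 0 →
        ∃ k w, minkowskiForm n T k k = 0 ∧ minkowskiForm n T w k = 0 ∧
          minkowskiForm n T w w ≠ 0 ∧ minkowskiForm n T p k ≠ 0 ∧ minkowskiForm n T p' k ≠ 0 := by
      intro l m s hl hm hml hs h h'
      have hk : ∀ x : Fin n → ℝ, minkowskiForm n T x (Pi.single T 1 + s • Pi.single l 1) =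
          x T - s * x l := by
        intro x
        rw [map_add, map_smul, minkowskiForm_single_time, minkowskiForm_single_space hl,
          smul_eq_mul]
        ring
      refine ⟨Pi.single T 1 + s • Pi.single l 1, Pi.single m 1, ?_, ?_, ?_, ?_, ?_⟩
      · rw [hk]
        simp [Pi.single_eq_of_ne hl, Pi.single_eq_of_ne hl.symm]
        linarith
      · rw [hk]; simp [Pi.single_eq_of_ne hm.symm, Pi.single_eq_of_ne hml.symm]
      · rw [minkowskiForm_single_space hm]; simp
      · rwa [hk]
      · rwa [hk]
    -- a null vector is orthogonal to at most one of the null vectors `e_T ± e_i`, `e_T + e_j`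
    have excl : ∀ x : Fin n → ℝ, x ≠ 0 → minkowskiForm n T x x = 0 →
        (x T - 1 * x i ≠ 0 ∧ x T - (-1) * x i ≠ 0) ∨ (x T - 1 * x i ≠ 0 ∧ x T - 1 * x j ≠ 0) ∨
        (x T - (-1) * x i ≠ 0 ∧ x T - 1 * x j ≠ 0) := by
      intro x hx hxx
      obtain ⟨h1, h2⟩ := hne x hx hxx
      have h3 : 0 < x T ^ 2 := by positivity
      by_cases a : x T - 1 * x i = 0
      · refine Or.inr (Or.inr ⟨fun b => ?_, fun b => ?_⟩)
        · apply h1; linarith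
        · have e1 : x i = x T := by linarith
          have e2 : x j = x T := by linarith
          rw [e1, e2] at h2; linarith
      · by_cases b : x T - (-1) * x i = 0
        · refine Or.inr (Or.inl ⟨a, fun c => ?_⟩)
          have e1 : x i = -x T := by linarith
          have e2 : x j = x T := by linarith
          rw [e1, e2] at h2; linarith
        · exact Or.inl ⟨a, b⟩
    have c1 := cand i j 1 hi hj hij.symm (by norm_num)
    have c2 := cand i j (-1) hi hj hij.symm (by norm_num)
    have c3 := cand j i 1 hj hi hij (by norm_num)
    rcases excl p hp hpp with ⟨a, b⟩ | ⟨a, b⟩ | ⟨a, b⟩ <;>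
    rcases excl p' hp' hpp' with ⟨a', b'⟩ | ⟨a', b'⟩ | ⟨a', b'⟩ <;>
    first
      | exact c1 (by assumption) (by assumption)
      | exact c2 (by assumption) (by assumption)
      | exact c3 (by assumption) (by assumption)

end concrete

theorem generic_nondegenerate_preserver_every_point_generic
    (n : ℕ) (hn : 4 ≤ n) (φ : (Fin n → ℝ) → (Fin n → ℝ))
    (hcont : Continuous φ)
    (hpres : ∀ a b : Fin n → ℝ, mq n (b - a) = 0 → mq n (φ b - φ a) = 0)
    (hnd : ¬ ∃ s' : Fin n → ℝ, ∀ x : Fin n → ℝ, mq n (φ x - s') = 0)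
    (h0 : φ 0 = 0)
    (hnc : ∃ ψ : (Fin n → ℝ) → (Fin n → ℝ), IsInducedMap n φ 0 ψ ∧
       ∃ p ∈ QSet n, ∃ p' ∈ QSet n, ψ p ≠ ψ p')
    (hgen : interior (φ ⁻¹' {0}) = ∅) :
    ∀ b : Fin n → ℝ, interior (φ ⁻¹' {b}) = ∅ := by
  have hT : n - 1 < n := by omega
  let T : Fin n := ⟨n - 1, hT⟩
  have hTi : ∀ i : Fin n, (i : ℕ) = n - 1 ↔ i = T := fun i => by simp [T, Fin.ext_iff]
  have hB : IsLorentzian (minkowskiForm n T) :=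
    isLorentzian_minkowskiForm (i := ⟨0, by omega⟩) (j := ⟨1, by omega⟩)
      (by simp [T, Fin.ext_iff]; omega) (by simp [T, Fin.ext_iff]; omega) (by simp)
  have hq : ∀ x, mq n x = minkowskiForm n T x x := by
    intro x
    rw [minkowskiForm_apply, mq, ← Finset.add_sum_erase _ _ (Finset.mem_univ T), sub_eq_add_neg,
      ← Finset.sum_neg_distrib]
    congr 1
    · simp [T, sq]
    · refine Finset.sum_congr rfl fun i hi => ?_
      rw [if_neg (by rw [hTi]; exact Finset.ne_of_mem_erase hi)]
      ring
  have hQ : ∀ p ∈ QSet n, p T = 1 ∧ minkowskiForm n T p p = 0 := by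
    rintro p ⟨h1, h2⟩
    have hpT : p T = 1 := h1 T rfl
    refine ⟨hpT, ?_⟩
    rw [← Finset.add_sum_erase _ _ (Finset.mem_univ T), if_pos rfl, zero_add] at h2
    rw [minkowskiForm_apply, hpT, one_mul, sub_eq_zero, ← h2]
    refine Finset.sum_congr rfl fun i hi => ?_
    rw [if_neg (by rw [hTi]; exact Finset.ne_of_mem_erase hi), sq]
  have hQ0 : ∀ p ∈ QSet n, p ≠ 0 := by
    intro p hp h
    have := (hQ p hp).1
    rw [h] at this; simp at this
  obtain ⟨ψ, hψ, p, hp, p', hp', hne⟩ := hnc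
  simp only [hq] at hpres hnd
  have hline : ∀ p ∈ QSet n, ∀ t : ℝ, ∃ s : ℝ, φ (t • p) = s • ψ p := fun p hp t => by
    simpa [h0] using (hψ p hp).2 t
  have hr := hQ _ (hψ p hp).1
  have hr' := hQ _ (hψ p' hp').1
  refine core_generic hB hcont hpres hnd (hQ0 p hp) (hQ p hp).2 (hQ0 p' hp') (hQ p' hp').2
    hr.2 hr'.2 (fun h => hne ?_) (hline p hp) (hline p' hp') hgen
  obtain ⟨c, hc⟩ := hB.prop _ _ (hQ0 _ (hψ p hp).1) hr.2 hr'.2 h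
  have hcT := congrFun hc T
  -- both vectors have last coordinate `1`, so the proportionality factor is `1`
  rw [hr'.1, Pi.smul_apply, hr.1, smul_eq_mul, mul_one] at hcT
  rw [hc, ← hcT, one_smul]
end
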